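/- arXiv:1502.00859 — 2 statements merged into one kernel-verified Lean document; each statement's English description precedes it below -/
import Mathlib

section
/- There is an on-line coloring algorithm A such that for every P_9-free bipartite graph G and every enumeration π of its vertices, A properly colors the on-line graph (G, π) using at most 6(χ*(G) + 1)^2 colors, where χ*(G) is the on-line chromatic number of G. -/
/-! ### P_n-free graphs -/

/-- `f` lists the vertices of an induced path on `n` vertices in `G`. -/
def IsInducedPath {V : Type*} (G : SimpleGraph V) (n : ℕ) (f : Fin n → V) : Prop :=
  Function.Injective f ∧
    ∀ a b : Fin n, G.Adj (f a) (f b) ↔ (a.val + 1 = b.val ∨ b.val + 1 = a.val)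

/-- `G` contains no induced path on `n` vertices. -/
def PFree {V : Type*} (G : SimpleGraph V) (n : ℕ) : Prop :=
  ¬ ∃ f : Fin n → V, IsInducedPath G n f

/-! ### On-line coloring algorithms and the on-line chromatic number -/

/-- A (deterministic) on-line coloring algorithm: upon presentation of the `(k+1)`-st vertex it
sees the induced subgraph on the first `k+1` vertices in order of presentation (modelled as a
graph on `Fin (k+1)`, the new vertex being the last one) and it outputs the color of the new
vertex. -/
def OnlineAlg : Type := (k : ℕ) → SimpleGraph (Fin (k + 1)) → ℕ

/-- The color that algorithm `A` assigns to the `i`-th presented vertex of the on-line graph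
`G` (vertices presented in the order `0, 1, 2, …` of `Fin n`). -/
def runColor (A : OnlineAlg) {n : ℕ} (G : SimpleGraph (Fin n)) (i : Fin n) : ℕ :=
  A i.val (G.comap (Fin.castLE i.isLt))

/-- An on-line algorithm is required to always produce a proper coloring. -/
def IsProperAlg (A : OnlineAlg) : Prop :=
  ∀ (n : ℕ) (G : SimpleGraph (Fin n)) (i j : Fin n),
    G.Adj i j → runColor A G i ≠ runColor A G j

/-- The number of colors that `A` uses on the on-line graph `G`. -/
def numColors (A : OnlineAlg) {n : ℕ} (G : SimpleGraph (Fin n)) : ℕ :=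
  (Finset.univ.image (runColor A G)).card

/-- The on-line chromatic number of a finite graph `G`:
`χ*(G) = inf_A max_π A(G,π)`, the infimum over all proper on-line algorithms of the maximum
over all enumerations `π` of the vertices of `G` of the number of colors used. -/
noncomputable def onlineChrom (V : Type) [Fintype V] (G : SimpleGraph V) : ℕ :=
  sInf { m : ℕ | ∃ A : OnlineAlg, IsProperAlg A ∧
          ∀ (n : ℕ) (π : Fin n ≃ V), numColors A (G.comap π) ≤ m }


namespace OnlineP9

structure SG where
  V : Type
  adj : V → V → Prop
  sd : V → Bool

def pt : SG := ⟨Unit, fun _ _ => False, fun _ => false⟩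
def dbl (H : SG) : SG :=
  ⟨Bool × H.V, fun p q => p.1 = q.1 ∧ H.adj p.2 q.2, fun p => xor p.1 (H.sd p.2)⟩
def dup (H : SG) : SG :=
  ⟨Bool × H.V, fun p q => p.1 = q.1 ∧ H.adj p.2 q.2, fun p => H.sd p.2⟩
def cone (H : SG) : SG :=
  ⟨Option H.V, fun p q => match p, q with
    | none, none => False
    | none, some x => H.sd x = true
    | some x, none => H.sd x = true
    | some x, some y => H.adj x y,
   fun p => match p with
    | none => false
    | some x => H.sd x⟩

def X : ℕ → SG
  | 0 => pt
  | k + 1 => cone (dup (dbl (X k)))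

def root : (k : ℕ) → (X k).V
  | 0 => ()
  | _ + 1 => none

theorem root_sd (k : ℕ) : (X k).sd (root k) = false := by
  cases k <;> rfl

def pat (k : ℕ) : ℕ → SG
  | 0 => X k
  | 1 => dbl (X k)
  | _ + 2 => dup (dbl (X k))

/-! lower bound -/

/-- color of vertex `i` of a graph on `ℕ` -/
def cA (A : OnlineAlg) (G : SimpleGraph ℕ) (i : ℕ) : ℕ :=
  A i (G.comap (fun a : Fin (i + 1) => a.val))

theorem cA_congr (A : OnlineAlg) {G G' : SimpleGraph ℕ} {i : ℕ}
    (h : ∀ x y, x ≤ i → y ≤ i → (G.Adj x y ↔ G'.Adj x y)) : cA A G i = cA A G' i := by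
  unfold cA
  congr 1
  ext a b
  have ha := a.2
  have hb := b.2
  exact h a.val b.val (by omega) (by omega)

theorem cA_run (A : OnlineAlg) (G : SimpleGraph ℕ) (n : ℕ) (i : Fin n) :
    runColor A (G.comap (fun a : Fin n => a.val)) i = cA A G i.val := rfl

theorem cA_proper {A : OnlineAlg} (hA : IsProperAlg A) (G : SimpleGraph ℕ) {i j : ℕ}
    (h : G.Adj i j) : cA A G i ≠ cA A G j := by
  have := hA (max i j + 1) (G.comap (fun a : Fin (max i j + 1) => a.val))
    ⟨i, by omega⟩ ⟨j, by omega⟩ h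
  exact this

/-- The adversary can present a family of independent copies. -/
def Fam (A : OnlineAlg) (ι : Type) (H : SG) (k : ℕ) : Prop :=
  ∀ (G : SimpleGraph ℕ) (m : ℕ), ∃ (G' : SimpleGraph ℕ) (N : ℕ) (φ : ι → H.V → ℕ),
    m ≤ N ∧
    (∀ x y, x < m → y < m → (G'.Adj x y ↔ G.Adj x y)) ∧
    (∀ i j x y, φ i x = φ j y → i = j ∧ x = y) ∧
    (∀ i x, m ≤ φ i x ∧ φ i x < N) ∧
    (∀ z, m ≤ z → z < N → ∃ i x, φ i x = z) ∧
    (∀ i j x y, G'.Adj (φ i x) (φ j y) ↔ i = j ∧ H.adj x y) ∧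
    (∀ z, z < m → ∀ i x, ¬ G'.Adj z (φ i x)) ∧
    (∀ i, ∃ (b : Bool) (K : Finset ℕ), k ≤ K.card ∧
      ∀ c ∈ K, ∃ x, H.sd x = b ∧ cA A G' (φ i x) = c)

theorem fam_dup {A : OnlineAlg} {ι : Type} {H : SG} {k : ℕ} (h : Fam A ι H k) :
    Fam A (Bool × ι) H k := by
  intro G m
  obtain ⟨G1, N1, φ1, a1, b1, c1, d1, e1, f1, g1, h1⟩ := h G m
  obtain ⟨G2, N2, φ2, a2, b2, c2, d2, e2, f2, g2, h2⟩ := h G1 N1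
  refine ⟨G2, N2, fun p x => if p.1 then φ2 p.2 x else φ1 p.2 x, a1.trans a2, ?_, ?_, ?_, ?_, ?_,
    ?_, ?_⟩
  · intro x y hx hy
    rw [b2 x y (by omega) (by omega), b1 x y hx hy]
  · rintro ⟨b, i⟩ ⟨c, j⟩ x y hh
    have := d1 i x; have := d1 j y; have := d2 i x; have := d2 j y
    cases b <;> cases c <;> simp at hh ⊢
    · exact c1 _ _ _ _ hh
    · omega
    · omega
    · exact c2 _ _ _ _ hh
  · rintro ⟨b, i⟩ x
    have := d1 i x; have := d2 i x
    cases b <;> simp <;> omega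
  · intro z hz hz'
    by_cases hh : z < N1
    · obtain ⟨i, x, hx⟩ := e1 z hz hh
      exact ⟨(false, i), x, by simpa using hx⟩
    · obtain ⟨i, x, hx⟩ := e2 z (by omega) hz'
      exact ⟨(true, i), x, by simpa using hx⟩
  · rintro ⟨b, i⟩ ⟨c, j⟩ x y
    have h1 := d1 i x; have h2 := d1 j y
    cases b <;> cases c <;> simp
    · rw [b2 _ _ h1.2 h2.2, f1]
    · exact g2 _ h1.2 _ _
    · intro hh; exact g2 _ h2.2 _ _ hh.symm
    · rw [f2]
  · rintro z hz ⟨b, i⟩ x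
    have h1 := d1 i x
    cases b <;> simp
    · rw [b2 _ _ (by omega) h1.2]; exact g1 z hz i x
    · exact g2 z (by omega) i x
  · rintro ⟨b, i⟩
    cases b <;> simp only [Bool.false_eq_true, if_false, if_true]
    · obtain ⟨b, K, hK, hc⟩ := h1 i
      refine ⟨b, K, hK, fun c hcK => ?_⟩
      obtain ⟨x, hx, hx'⟩ := hc c hcK
      refine ⟨x, hx, ?_⟩
      rw [← hx']
      have := d1 i x
      exact cA_congr A fun u v hu hv => b2 u v (by omega) (by omega)
    · exact h2 i

theorem exists_equiv {α β : Type} [DecidableEq α] [DecidableEq β] (e0 : α ≃ β) {i i' : α}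
    {s s' : β} (hi : i ≠ i') (hs : s ≠ s') : ∃ e : α ≃ β, e i = s ∧ e i' = s' := by
  let e1 := e0.trans (Equiv.swap (e0 i) s)
  have h1 : e1 i = s := by simp [e1]
  have h2 : e1 i' ≠ s := by rw [← h1]; exact fun h => hi (e1.injective h).symm
  refine ⟨e1.trans (Equiv.swap (e1 i') s'), ?_, ?_⟩
  · simp only [Equiv.trans_apply, h1]
    exact Equiv.swap_apply_of_ne_of_ne h2.symm hs
  · simp only [Equiv.trans_apply]
    simp

theorem fam_cone {A : OnlineAlg} (hA : IsProperAlg A) {H : SG} {k : ℕ}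
    (h : Fam A (Bool × Bool × Unit) H k) :
    Fam A Unit (cone (dup (dbl H))) (k + 1) := by
  intro G m
  obtain ⟨G1, N, φ, a1, b1, c1, d1, e1, f1, g1, h1⟩ := h G m
  choose b K hK hc using h1
  -- two copies with same side
  obtain ⟨i, i', hii, hb⟩ := Fintype.exists_ne_map_eq_of_card_lt b (by decide)
  -- choose slots
  have key : ∃ (e : (Bool × Bool × Unit) ≃ (Bool × Bool)),
      ((¬ K i' ⊆ K i) ∧ (e i).2 = false ∧ (e i').2 = false) ∨
      (K i' ⊆ K i ∧ (e i).2 = !(b i) ∧ (e i').2 = b i) := by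
    let e0 : (Bool × Bool × Unit) ≃ (Bool × Bool) :=
      Equiv.prodCongr (Equiv.refl _) (Equiv.prodPUnit _)
    by_cases hsub : K i' ⊆ K i
    · obtain ⟨e, h1, h2⟩ := exists_equiv e0 (s := (false, !(b i))) (s' := (false, b i)) hii
        (by simp)
      exact ⟨e, Or.inr ⟨hsub, by rw [h1], by rw [h2]⟩⟩
    · obtain ⟨e, h1, h2⟩ := exists_equiv e0 (s := (false, false)) (s' := (true, false)) hii
        (by simp)
      exact ⟨e, Or.inl ⟨hsub, by rw [h1], by rw [h2]⟩⟩
  obtain ⟨e, he⟩ := key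
  let ψ : (dup (dbl H)).V → ℕ := fun p => φ (e.symm (p.1, p.2.1)) p.2.2
  have ψlt : ∀ p, ψ p < N := fun p => (d1 _ _).2
  have ψge : ∀ p, m ≤ ψ p := fun p => (d1 _ _).1
  have ψinj : ∀ p q, ψ p = ψ q → p = q := by
    rintro ⟨c, β, x⟩ ⟨c', β', x'⟩ hh
    obtain ⟨h1, h2⟩ := c1 _ _ _ _ hh
    have h3 := e.symm.injective h1
    simp at h3 h2
    obtain ⟨rfl, rfl⟩ := h3
    subst h2
    rfl
  have ψslot : ∀ i x, φ i x = ψ ((e i).1, (e i).2, x) := by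
    intro i x; simp [ψ]
  let G2 : SimpleGraph ℕ :=
    { Adj := fun x y => (x < N ∧ y < N ∧ G1.Adj x y) ∨
        (x = N ∧ ∃ p, (dup (dbl H)).sd p = true ∧ y = ψ p) ∨
        (y = N ∧ ∃ p, (dup (dbl H)).sd p = true ∧ x = ψ p)
      symm := ⟨by
        rintro x y (⟨h1, h2, h3⟩ | h | h)
        · exact Or.inl ⟨h2, h1, h3.symm⟩
        · exact Or.inr (Or.inr h)
        · exact Or.inr (Or.inl h)⟩
      loopless := ⟨by
        rintro x (⟨h1, h2, h3⟩ | ⟨h, p, -, hp⟩ | ⟨h, p, -, hp⟩)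
        · exact G1.loopless.irrefl _ h3
        · have := ψlt p; omega
        · have := ψlt p; omega⟩ }
  have hG2 : ∀ x y, x < N → y < N → (G2.Adj x y ↔ G1.Adj x y) := by
    intro x y hx hy
    constructor
    · rintro (⟨-, -, h3⟩ | ⟨h, -⟩ | ⟨h, -⟩)
      · exact h3
      · omega
      · omega
    · intro h; exact Or.inl ⟨hx, hy, h⟩
  have hG2N : ∀ p, G2.Adj N (ψ p) ↔ (dup (dbl H)).sd p = true := by
    intro p
    constructor
    · rintro (⟨h, -⟩ | ⟨-, q, hq, hpq⟩ | ⟨h, -⟩)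
      · omega
      · rw [ψinj _ _ hpq]; exact hq
      · have := ψlt p; omega
    · intro h; exact Or.inr (Or.inl ⟨rfl, p, h, rfl⟩)
  have hcol : ∀ x, x < N → cA A G2 x = cA A G1 x := fun x hx =>
    cA_congr A fun u v hu hv => hG2 u v (by omega) (by omega)
  refine ⟨G2, N + 1, fun _ p => match p with | none => N | some p => ψ p, by omega, ?_, ?_, ?_, ?_,
    ?_, ?_, ?_⟩
  · intro x y hx hy
    rw [hG2 x y (by omega) (by omega), b1 x y hx hy]
  · rintro ⟨⟩ ⟨⟩ (_ | p) (_ | q) hh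
    · exact ⟨rfl, rfl⟩
    · have := ψlt q; simp at hh; omega
    · have := ψlt p; simp at hh; omega
    · simp at hh; exact ⟨rfl, congrArg some (ψinj _ _ hh)⟩
  · rintro ⟨⟩ (_ | p)
    · simp; omega
    · have := ψlt p; have := ψge p; simp; omega
  · intro z hz hz'
    by_cases hh : z = N
    · exact ⟨(), none, hh.symm⟩
    · obtain ⟨i, x, hx⟩ := e1 z hz (by omega)
      exact ⟨(), some ((e i).1, (e i).2, x), by rw [← hx, ψslot]⟩
  · rintro ⟨⟩ ⟨⟩ (_ | p) (_ | q)
    · simp [cone]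
    · simpa [cone] using hG2N q
    · simp only [cone]; rw [G2.adj_comm]; simpa using hG2N p
    · simp only [cone, true_and]
      rw [hG2 _ _ (ψlt p) (ψlt q)]
      simp only [ψ, f1]
      rw [e.symm.injective.eq_iff]
      simp [dup, dbl, Prod.ext_iff, and_assoc]
  · rintro z hz ⟨⟩ (_ | p)
    · show ¬ G2.Adj z N
      rintro (⟨-, h, -⟩ | ⟨h, -⟩ | ⟨-, p, -, hp⟩)
      · omega
      · omega
      · have := ψge p; omega
    · have := ψlt p
      simp only
      rw [hG2 _ _ (by omega) this]
      exact g1 z hz _ _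
  · rintro ⟨⟩
    have col : ∀ j, ∀ c ∈ K j, ∃ x : (cone (dup (dbl H))).V,
        (cone (dup (dbl H))).sd x = xor (e j).2 (b j) ∧
        cA A G2 (match x with | none => N | some p => ψ p) = c := by
      intro j c hcj
      obtain ⟨x, hx, hx'⟩ := hc j c hcj
      refine ⟨some ((e j).1, (e j).2, x), ?_, ?_⟩
      · simp [cone, dup, dbl, hx]
      · simp only [← ψslot]
        rw [hcol _ (d1 _ _).2]; exact hx'
    rcases he with ⟨hs, h1, h2⟩ | ⟨hs, h1, h2⟩
    · refine ⟨b i, K i ∪ K i', ?_, ?_⟩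
      · have : (K i).card < (K i ∪ K i').card := by
          apply Finset.card_lt_card
          refine ⟨Finset.subset_union_left, fun hh => hs ?_⟩
          exact Finset.subset_union_right.trans hh
        have := hK i; omega
      · intro c hcc
        rcases Finset.mem_union.1 hcc with hcc | hcc
        · obtain ⟨x, hx, hx'⟩ := col i c hcc
          exact ⟨x, by rw [hx, h1]; simp, hx'⟩
        · obtain ⟨x, hx, hx'⟩ := col i' c hcc
          exact ⟨x, by rw [hx, h2, hb]; simp, hx'⟩
    · have hN : cA A G2 N ∉ K i := by
        intro hmem
        obtain ⟨x, hx, hx'⟩ := hc i _ hmem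
        have hadj : G2.Adj N (ψ ((e i).1, (e i).2, x)) := by
          exact (hG2N _).2 (by simp [dup, dbl, hx, h1])
        apply cA_proper hA G2 hadj
        rw [← ψslot, hcol _ (d1 _ _).2, hx']
      refine ⟨false, insert (cA A G2 N) (K i'), ?_, ?_⟩
      · rw [Finset.card_insert_of_notMem (fun hh => hN (hs hh))]
        have := hK i'; omega
      · intro c hcc
        rcases Finset.mem_insert.1 hcc with hcc | hcc
        · exact ⟨none, rfl, hcc.symm⟩
        · obtain ⟨x, hx, hx'⟩ := col i' c hcc
          exact ⟨x, by rw [hx, h2, hb]; simp, hx'⟩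

theorem fam_pt (A : OnlineAlg) : Fam A Unit pt 1 := by
  intro G m
  refine ⟨{ Adj := fun x y => x < m ∧ y < m ∧ G.Adj x y
            symm := ⟨fun x y h => ⟨h.2.1, h.1, h.2.2.symm⟩⟩
            loopless := ⟨fun x h => G.loopless.irrefl _ h.2.2⟩ }, m + 1, fun _ _ => m, by omega,
    ?_, ?_, ?_, ?_, ?_, ?_, ?_⟩
  · intro x y hx hy
    simp [hx, hy]
  · rintro ⟨⟩ ⟨⟩ ⟨⟩ ⟨⟩ -; exact ⟨rfl, rfl⟩
  · intro i x; simp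
  · intro z h1 h2; exact ⟨(), (), by show m = z; omega⟩
  · intros; simp [pt]
  · intros; simp
  · intro i
    refine ⟨false, {_}, by simp, fun c hc => ⟨(), rfl, (Finset.mem_singleton.1 hc).symm⟩⟩

theorem fam_X {A : OnlineAlg} (hA : IsProperAlg A) (k : ℕ) : Fam A Unit (X k) (k + 1) := by
  induction k with
  | zero => exact fam_pt A
  | succ k ih => exact fam_cone hA (fam_dup (fam_dup ih))

theorem lower {V : Type} [Fintype V] (G : SimpleGraph V) (k : ℕ) (φ : (X k).V → V)
    (hφ : Function.Injective φ) (hadj : ∀ x y, G.Adj (φ x) (φ y) ↔ (X k).adj x y) :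
    k + 1 ≤ onlineChrom V G := by
  classical
  have hne : { m : ℕ | ∃ A : OnlineAlg, IsProperAlg A ∧
          ∀ (n : ℕ) (π : Fin n ≃ V), numColors A (G.comap π) ≤ m }.Nonempty := by
    refine ⟨Fintype.card V, fun k _ => k, ?_, ?_⟩
    · intro n G i j h hh
      exact G.ne_of_adj h (Fin.ext hh)
    · intro n π
      refine Finset.card_image_le.trans ?_
      rw [Finset.card_univ, Fintype.card_congr π]
  obtain ⟨A, hA, hmax⟩ := Nat.sInf_mem hne
  change ∀ (n : ℕ) (π : Fin n ≃ V), numColors A (G.comap π) ≤ onlineChrom V G at hmax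
  obtain ⟨G', N, ψ', -, -, c1, d1, e1, f1, -, h1⟩ := fam_X hA k ⊥ 0
  obtain ⟨b, K, hK, hc⟩ := h1 ()
  let ψ := ψ' ()
  have ψinj : Function.Injective ψ := fun x y h => (c1 _ _ _ _ h).2
  have : Finite (X k).V := Finite.of_injective φ hφ
  have := Fintype.ofFinite (X k).V
  let n := Fintype.card V
  have hNn : N ≤ n := by
    have h1 : Fintype.card (X k).V ≤ n := Fintype.card_le_of_injective φ hφ
    have h2 : N ≤ Fintype.card (X k).V := by
      have : Finset.range N ⊆ Finset.univ.image ψ := by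
        intro z hz
        obtain ⟨⟨⟩, x, hx⟩ := e1 z (Nat.zero_le _) (Finset.mem_range.1 hz)
        exact Finset.mem_image.2 ⟨x, Finset.mem_univ _, hx⟩
      have h3 := Finset.card_le_card this
      rw [Finset.card_range] at h3
      exact h3.trans Finset.card_image_le
    omega
  have hlt : ∀ x, ψ x < n := fun x => lt_of_lt_of_le (d1 () x).2 hNn
  let e0 : V ≃ Fin n := Fintype.equivFin V
  let f : (X k).V → Fin n := fun x => ⟨ψ x, hlt x⟩
  let g : (X k).V → Fin n := fun x => e0 (φ x)
  have finj : Function.Injective f := fun x y h => ψinj (congrArg Fin.val h)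
  have ginj : Function.Injective g := e0.injective.comp hφ
  let e : {y // y ∈ Set.range f} ≃ {y // y ∈ Set.range g} :=
    (Equiv.ofInjective f finj).symm.trans (Equiv.ofInjective g ginj)
  let π : Fin n ≃ V := e.extendSubtype.trans e0.symm
  have hπ : ∀ x, π (f x) = φ x := by
    intro x
    simp only [π, Equiv.trans_apply]
    rw [Equiv.extendSubtype_apply_of_mem e (f x) ⟨x, rfl⟩]
    have : (Equiv.ofInjective f finj).symm ⟨f x, ⟨x, rfl⟩⟩ = x := Equiv.ofInjective_symm_apply finj x
    simp only [e, Equiv.trans_apply, this]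
    simp [g]
  refine le_trans ?_ (hmax n π)
  refine hK.trans ?_
  apply Finset.card_le_card
  intro c hcK
  obtain ⟨x, -, hx⟩ := hc c hcK
  refine Finset.mem_image.2 ⟨f x, Finset.mem_univ _, ?_⟩
  rw [← hx]
  unfold runColor cA
  change A (ψ x) _ = A (ψ x) _
  congr 1
  ext a b
  have hxN := (d1 () x).2
  have hxa := a.2
  have hxb := b.2
  obtain ⟨⟨⟩, u, hu⟩ := e1 a.val (Nat.zero_le _) (by change ψ' () x < N at hxN; simp only [f, ψ] at hxa; omega)
  obtain ⟨⟨⟩, v, hv⟩ := e1 b.val (Nat.zero_le _) (by change ψ' () x < N at hxN; simp only [f, ψ] at hxb; omega)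
  have ha : Fin.castLE (f x).isLt a = f u := Fin.ext hu.symm
  have hb : Fin.castLE (f x).isLt b = f v := Fin.ext hv.symm
  simp only [SimpleGraph.comap_adj]
  rw [ha, hb, hπ, hπ, hadj, ← hu, ← hv, f1]
  simp

end OnlineP9

namespace OnlineP9

/-- restriction of the graph to vertices `< n` -/
def T (G : SimpleGraph ℕ) (n : ℕ) : SimpleGraph ℕ where
  Adj x y := x < n ∧ y < n ∧ G.Adj x y
  symm := ⟨fun _ _ h => ⟨h.2.1, h.1, h.2.2.symm⟩⟩
  loopless := ⟨fun _ h => G.loopless.irrefl _ h.2.2⟩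

theorem T_adj {G : SimpleGraph ℕ} {n x y : ℕ} : (T G n).Adj x y ↔ x < n ∧ y < n ∧ G.Adj x y :=
  Iff.rfl

theorem T_T (G : SimpleGraph ℕ) {m n : ℕ} (h : m ≤ n) : T (T G n) m = T G m := by
  ext x y
  simp only [T_adj]
  constructor
  · tauto
  · rintro ⟨a, b, c⟩; exact ⟨a, b, by omega, by omega, c⟩

def comp (G : SimpleGraph ℕ) (n x : ℕ) : Set ℕ := {z | (T G n).Reachable x z}

def C (G : SimpleGraph ℕ) (v : ℕ) : Set ℕ := comp G (v + 1) v

def Prop2 (G : SimpleGraph ℕ) (f : ℕ → Bool) (S : Set ℕ) : Prop :=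
  ∀ x ∈ S, ∀ y ∈ S, G.Adj x y → f x ≠ f y

def Emb (G : SimpleGraph ℕ) (f : ℕ → Bool) (Q : Set ℕ) (H : SG) (φ : H.V → ℕ) : Prop :=
  Function.Injective φ ∧ (∀ x y, G.Adj (φ x) (φ y) ↔ H.adj x y) ∧ (∀ x, f (φ x) = H.sd x) ∧
    ∀ x, φ x ∈ Q

def Has (G : SimpleGraph ℕ) (S P : Set ℕ) (H : SG) : Prop :=
  ∃ f, Prop2 G f S ∧ ∃ φ, Emb G f (S ∩ P) H φ

def Mset (G : SimpleGraph ℕ) (r : ℕ) : Set ℕ :=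
  {w | ∃ x1 x2, G.Adj w x1 ∧ x1 < w ∧ G.Adj w x2 ∧ x2 < w ∧ ¬ (T G w).Reachable x1 x2 ∧
    Has G (comp G w x1) Set.univ (pat r 2) ∧ Has G (comp G w x2) Set.univ (pat r 2)}

def Pset (G : SimpleGraph ℕ) (r : ℕ) : ℕ → Set ℕ
  | 0 => Set.univ
  | _ + 1 => Mset G r

def idx (r : ℕ) : ℕ → ℕ
  | 0 => r
  | i + 1 => i

def Str (G : SimpleGraph ℕ) (S : Set ℕ) (r j q : ℕ) : Prop :=
  Has G S (Pset G r j) (pat (idx r j) q)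

noncomputable def rOf (G : SimpleGraph ℕ) (S : Set ℕ) : ℕ := sSup {k | Has G S Set.univ (X k)}

noncomputable def jOf (G : SimpleGraph ℕ) (S : Set ℕ) (r : ℕ) : ℕ := sSup {j | Str G S r j 0}

open Classical in
noncomputable def qOf (G : SimpleGraph ℕ) (S : Set ℕ) (r j : ℕ) : ℕ :=
  if Str G S r j 2 then 2 else if Str G S r j 1 then 1 else 0

noncomputable def st (G : SimpleGraph ℕ) (v : ℕ) : ℕ × ℕ × ℕ :=
  (rOf G (C G v), jOf G (C G v) (rOf G (C G v)),
    qOf G (C G v) (rOf G (C G v)) (jOf G (C G v) (rOf G (C G v))))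

noncomputable def first (G : SimpleGraph ℕ) (v : ℕ) : ℕ := sInf {x | x ∈ C G v ∧ st G x = st G v}

def Anch (G : SimpleGraph ℕ) (S : Set ℕ) (r j a : ℕ) : Prop :=
  ∃ f, Prop2 G f S ∧ ∃ φ, Emb G f (S ∩ Pset G r j) (X (idx r j)) φ ∧ φ (root (idx r j)) = a

noncomputable def anchor (G : SimpleGraph ℕ) (u : ℕ) : ℕ :=
  sInf {a | Anch G (C G u) (st G u).1 (st G u).2.1 a}

open Classical in
noncomputable def bit (G : SimpleGraph ℕ) (v : ℕ) : ℕ :=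
  if ∃ f, Prop2 G f (C G v) ∧ f v = f (anchor G (first G v)) then 1 else 0

def Good (G : SimpleGraph ℕ) : Prop :=
  PFree G 9 ∧ ∃ side : ℕ → Bool, ∀ x y, G.Adj x y → side x ≠ side y

open Classical in
noncomputable def colr (G : SimpleGraph ℕ) (v : ℕ) : ℕ :=
  if Good (T G (v + 1)) then 2 * Encodable.encode (st G v, bit G v) else 2 * v + 1

/-! locality -/

theorem comp_lt {G : SimpleGraph ℕ} {n x z : ℕ} (hx : x < n) (hz : z ∈ comp G n x) : z < n := by
  have h : (T G n).Reachable x z := hz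
  rw [SimpleGraph.reachable_iff_reflTransGen] at h
  induction h with
  | refl => exact hx
  | tail _ h2 ih => exact h2.2.1

theorem C_lt {G : SimpleGraph ℕ} {v z : ℕ} (hz : z ∈ C G v) : z < v + 1 :=
  comp_lt (Nat.lt_succ_self v) hz

theorem comp_T (G : SimpleGraph ℕ) {m n : ℕ} (h : m ≤ n) (x : ℕ) : comp (T G n) m x = comp G m x := by
  unfold comp; rw [T_T G h]

theorem C_T (G : SimpleGraph ℕ) {v n : ℕ} (h : v < n) : C (T G n) v = C G v := comp_T G h v

theorem Prop2_T (G : SimpleGraph ℕ) {n : ℕ} {f} {S : Set ℕ} (hS : ∀ z ∈ S, z < n) :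
    Prop2 (T G n) f S ↔ Prop2 G f S := by
  constructor
  · intro h x hx y hy hxy; exact h x hx y hy ⟨hS x hx, hS y hy, hxy⟩
  · intro h x hx y hy hxy; exact h x hx y hy hxy.2.2

theorem Emb_T (G : SimpleGraph ℕ) {n : ℕ} {f} {S : Set ℕ} (hS : ∀ z ∈ S, z < n) {H φ} :
    Emb (T G n) f S H φ ↔ Emb G f S H φ := by
  have : (∀ x, φ x ∈ S) → ∀ x y, ((T G n).Adj (φ x) (φ y) ↔ G.Adj (φ x) (φ y)) := by
    intro h x y
    rw [T_adj]
    have := hS _ (h x); have := hS _ (h y)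
    tauto
  unfold Emb
  constructor
  · rintro ⟨a, b, c, d⟩; exact ⟨a, fun x y => by rw [← this d, b], c, d⟩
  · rintro ⟨a, b, c, d⟩; exact ⟨a, fun x y => by rw [this d, b], c, d⟩

theorem Has_T (G : SimpleGraph ℕ) {n : ℕ} {S P : Set ℕ} (hS : ∀ z ∈ S, z < n) {H} :
    Has (T G n) S P H ↔ Has G S P H := by
  unfold Has
  simp only [Prop2_T G hS, Emb_T G (S := S ∩ P) (fun z hz => hS z hz.1)]

theorem Mset_T (G : SimpleGraph ℕ) {n w r : ℕ} (hw : w < n) : w ∈ Mset (T G n) r ↔ w ∈ Mset G r := by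
  unfold Mset
  simp only [Set.mem_ofPred_eq]
  refine exists_congr fun x1 => exists_congr fun x2 => ?_
  rw [T_T G hw.le, comp_T G hw.le, comp_T G hw.le, T_adj, T_adj]
  by_cases h1 : x1 < w
  · by_cases h2 : x2 < w
    · rw [Has_T G (fun z hz => (comp_lt h1 hz).trans hw), Has_T G (fun z hz => (comp_lt h2 hz).trans hw)]
      have := h1.trans hw; have := h2.trans hw
      tauto
    · tauto
  · tauto

theorem Pset_T (G : SimpleGraph ℕ) {n r j : ℕ} {S : Set ℕ} (hS : ∀ z ∈ S, z < n) :
    S ∩ Pset (T G n) r j = S ∩ Pset G r j := by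
  cases j with
  | zero => rfl
  | succ i =>
    ext z
    constructor
    · rintro ⟨a, b⟩; exact ⟨a, (Mset_T G (hS z a)).1 b⟩
    · rintro ⟨a, b⟩; exact ⟨a, (Mset_T G (hS z a)).2 b⟩

theorem Str_T (G : SimpleGraph ℕ) {n r j q : ℕ} {S : Set ℕ} (hS : ∀ z ∈ S, z < n) :
    Str (T G n) S r j q ↔ Str G S r j q := by
  unfold Str Has
  rw [Pset_T G hS]
  exact Has_T G hS

theorem Anch_T (G : SimpleGraph ℕ) {n r j a : ℕ} {S : Set ℕ} (hS : ∀ z ∈ S, z < n) :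
    Anch (T G n) S r j a ↔ Anch G S r j a := by
  unfold Anch
  rw [Pset_T G hS]
  simp only [Prop2_T G hS, Emb_T G (S := S ∩ Pset G r j) (fun z hz => hS z hz.1)]

theorem st_T (G : SimpleGraph ℕ) {v n : ℕ} (h : v < n) : st (T G n) v = st G v := by
  have hS : ∀ z ∈ C G v, z < n := fun z hz => (C_lt hz).trans_le h
  unfold st
  rw [C_T G h]
  have h1 : rOf (T G n) (C G v) = rOf G (C G v) := by
    exact congrArg sSup (Set.ext fun k => Has_T G hS)
  have h2 : ∀ r, jOf (T G n) (C G v) r = jOf G (C G v) r := by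
    intro r; exact congrArg sSup (Set.ext fun j => Str_T G hS)
  have h3 : ∀ r j, qOf (T G n) (C G v) r j = qOf G (C G v) r j := by
    intro r j; unfold qOf
    rw [propext (Str_T G hS (r := r) (j := j) (q := 2)), propext (Str_T G hS (r := r) (j := j) (q := 1))]
  rw [h1, h2, h3]

theorem first_T (G : SimpleGraph ℕ) {v n : ℕ} (h : v < n) : first (T G n) v = first G v := by
  unfold first
  rw [C_T G h, st_T G h]
  congr 1
  ext x
  refine and_congr_right fun hx => ?_
  rw [st_T G ((C_lt hx).trans_le h)]

theorem anchor_T (G : SimpleGraph ℕ) {v n : ℕ} (h : v < n) : anchor (T G n) v = anchor G v := by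
  have hS : ∀ z ∈ C G v, z < n := fun z hz => (C_lt hz).trans_le h
  unfold anchor
  rw [C_T G h, st_T G h]
  exact congrArg sInf (Set.ext fun j => Anch_T G hS)

theorem mem_C_self (G : SimpleGraph ℕ) (v : ℕ) : v ∈ C G v := SimpleGraph.Reachable.refl v

theorem first_mem (G : SimpleGraph ℕ) (v : ℕ) : first G v ∈ C G v ∧ st G (first G v) = st G v :=
  Nat.sInf_mem (s := {x | x ∈ C G v ∧ st G x = st G v}) ⟨v, mem_C_self G v, rfl⟩

theorem first_le (G : SimpleGraph ℕ) {v x : ℕ} (h : x ∈ C G v) (h' : st G x = st G v) :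
    first G v ≤ x :=
  Nat.sInf_le (s := {x | x ∈ C G v ∧ st G x = st G v}) ⟨h, h'⟩

theorem bit_T (G : SimpleGraph ℕ) {v n : ℕ} (h : v < n) : bit (T G n) v = bit G v := by
  have hS : ∀ z ∈ C G v, z < n := fun z hz => (C_lt hz).trans_le h
  unfold bit
  rw [C_T G h, first_T G h, anchor_T G (hS _ (first_mem G v).1)]
  have : (∃ f, Prop2 (T G n) f (C G v) ∧ f v = f (anchor G (first G v))) =
      (∃ f, Prop2 G f (C G v) ∧ f v = f (anchor G (first G v))) :=
    propext (exists_congr fun f => and_congr_left fun _ => Prop2_T G hS)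
  rw [this]

theorem colr_T (G : SimpleGraph ℕ) {v n : ℕ} (h : v < n) : colr (T G n) v = colr G v := by
  unfold colr
  rw [T_T G h, st_T G h, bit_T G h]

theorem Good_T {G : SimpleGraph ℕ} (h : Good G) (n : ℕ) : Good (T G n) := by
  obtain ⟨h1, s, hs⟩ := h
  refine ⟨?_, s, fun x y hxy => hs x y hxy.2.2⟩
  rintro ⟨f, hf, hadj⟩
  apply h1
  have hlt : ∀ a, f a < n := by
    intro a
    have : ∃ b : Fin 9, (a.val + 1 = b.val ∨ b.val + 1 = a.val) := by
      by_cases ha : a.val = 0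
      · exact ⟨1, Or.inl (by simp [ha])⟩
      · exact ⟨⟨a.val - 1, by omega⟩, Or.inr (by simp; omega)⟩
    obtain ⟨b, hb⟩ := this
    exact ((hadj a b).2 hb).1
  refine ⟨f, hf, fun a b => ?_⟩
  rw [← hadj a b, T_adj]
  have := hlt a; have := hlt b; tauto

end OnlineP9

namespace OnlineP9

def Conn (G : SimpleGraph ℕ) (D : Set ℕ) : Prop :=
  ∀ x ∈ D, ∀ P : ℕ → Prop, P x → (∀ a ∈ D, ∀ b ∈ D, G.Adj a b → P a → P b) → ∀ z ∈ D, P z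

theorem comp_conn (G : SimpleGraph ℕ) (n x : ℕ) : Conn G (comp G n x) := by
  intro z0 hz0 P h0 hstep z hz
  have h1 : (T G n).Reachable z0 z := (SimpleGraph.Reachable.symm hz0).trans hz
  rw [SimpleGraph.reachable_iff_reflTransGen] at h1
  have : z ∈ comp G n x ∧ P z := by
    clear hz
    induction h1 with
    | refl => exact ⟨hz0, h0⟩
    | @tail a b _ h2 ih =>
      have hb : b ∈ comp G n x := SimpleGraph.Reachable.trans ih.1 h2.reachable
      exact ⟨hb, hstep _ ih.1 _ hb h2.2.2 ih.2⟩
  exact this.2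

theorem comp_mono (G : SimpleGraph ℕ) {m n : ℕ} (h : m ≤ n) (x : ℕ) : comp G m x ⊆ comp G n x := by
  intro z hz
  refine SimpleGraph.Reachable.mono ?_ hz
  intro a b hab
  exact ⟨hab.1.trans_le h, hab.2.1.trans_le h, hab.2.2⟩

theorem comp_eq {G : SimpleGraph ℕ} {n x z : ℕ} (h : z ∈ comp G n x) : comp G n z = comp G n x := by
  ext t
  exact ⟨fun ht => SimpleGraph.Reachable.trans h ht,
    fun ht => SimpleGraph.Reachable.trans (SimpleGraph.Reachable.symm h) ht⟩

theorem self_mem_comp (G : SimpleGraph ℕ) (n x : ℕ) : x ∈ comp G n x := SimpleGraph.Reachable.refl x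

theorem adj_mem_comp {G : SimpleGraph ℕ} {n x a b : ℕ} (h : a ∈ comp G n x) (ha : a < n) (hb : b < n)
    (hab : G.Adj a b) : b ∈ comp G n x :=
  SimpleGraph.Reachable.trans h (SimpleGraph.Adj.reachable (G := T G n) ⟨ha, hb, hab⟩)

theorem C_sub {G : SimpleGraph ℕ} {n u x : ℕ} (h : u ∈ comp G n x) (hu : u < n) :
    C G u ⊆ comp G n x := by
  rw [← comp_eq h]
  exact comp_mono G hu u

abbrev xs (side : ℕ → Bool) (ε : Bool) : ℕ → Bool := fun z => xor ε (side z)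

def HasS (G : SimpleGraph ℕ) (side : ℕ → Bool) (Q : Set ℕ) (H : SG) : Prop :=
  ∃ ε φ, Emb G (xs side ε) Q H φ

def Side (G : SimpleGraph ℕ) (side : ℕ → Bool) : Prop := ∀ x y, G.Adj x y → side x ≠ side y

theorem Side.prop2 {G : SimpleGraph ℕ} {side} (h : Side G side) (ε : Bool) (S : Set ℕ) :
    Prop2 G (xs side ε) S := by
  intro x _ y _ hxy
  have := h x y hxy
  simp only [xs]
  cases ε <;> simpa using this

theorem rigid {G : SimpleGraph ℕ} {side} (h : Side G side) {S : Set ℕ} (hS : Conn G S) {f}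
    (hf : Prop2 G f S) : ∃ ε, ∀ z ∈ S, f z = xs side ε z := by
  by_cases hne : S.Nonempty
  · obtain ⟨x, hx⟩ := hne
    refine ⟨xor (f x) (side x), hS x hx _ ?_ ?_⟩
    · simp [xs]
    · intro a ha b hb hab hPa
      have h1 := hf a ha b hb hab
      have h2 := h a b hab
      revert h1 h2 hPa
      simp only [xs]
      cases f a <;> cases f b <;> cases side a <;> cases side b <;> cases f x <;> cases side x <;> simp
  · exact ⟨false, fun z hz => absurd ⟨z, hz⟩ hne⟩

theorem Emb.congr {G : SimpleGraph ℕ} {f f' : ℕ → Bool} {Q : Set ℕ} {H φ} (h : Emb G f Q H φ)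
    (hff : ∀ z ∈ Q, f z = f' z) : Emb G f' Q H φ := by
  obtain ⟨a, b, c, d⟩ := h
  exact ⟨a, b, fun x => by rw [← hff _ (d x), c], d⟩

theorem Emb.mono {G : SimpleGraph ℕ} {f : ℕ → Bool} {Q Q' : Set ℕ} {H φ} (h : Emb G f Q H φ)
    (hff : Q ⊆ Q') : Emb G f Q' H φ := by
  obtain ⟨a, b, c, d⟩ := h
  exact ⟨a, b, c, fun x => hff (d x)⟩

theorem Has_iff {G : SimpleGraph ℕ} {side} (h : Side G side) {S P : Set ℕ} (hS : Conn G S) {H} :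
    Has G S P H ↔ HasS G side (S ∩ P) H := by
  constructor
  · rintro ⟨f, hf, φ, hφ⟩
    obtain ⟨ε, hε⟩ := rigid h hS hf
    exact ⟨ε, φ, hφ.congr fun z hz => hε z hz.1⟩
  · rintro ⟨ε, φ, hφ⟩
    exact ⟨_, h.prop2 ε S, φ, hφ⟩

theorem HasS.mono {G : SimpleGraph ℕ} {side} {Q Q' : Set ℕ} {H} (h : HasS G side Q H)
    (hff : Q ⊆ Q') : HasS G side Q' H := by
  obtain ⟨ε, φ, hφ⟩ := h
  exact ⟨ε, φ, hφ.mono hff⟩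

def Sep (G : SimpleGraph ℕ) (Q Q' : Set ℕ) : Prop := ∀ a ∈ Q, ∀ b ∈ Q', a ≠ b ∧ ¬ G.Adj a b

theorem m0 {G : SimpleGraph ℕ} {side} {Q1 Q2 Q : Set ℕ} {H ε φ1 φ2} (h1 : Emb G (xs side ε) Q1 H φ1)
    (h2 : Emb G (xs side (!ε)) Q2 H φ2) (hsep : Sep G Q1 Q2) (hQ1 : Q1 ⊆ Q) (hQ2 : Q2 ⊆ Q) :
    HasS G side Q (dbl H) := by
  obtain ⟨a1, b1, c1, d1⟩ := h1
  obtain ⟨a2, b2, c2, d2⟩ := h2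
  refine ⟨ε, fun p => if p.1 then φ2 p.2 else φ1 p.2, ?_, ?_, ?_, ?_⟩
  · rintro ⟨b, x⟩ ⟨c, y⟩ hh
    cases b <;> cases c <;> simp at hh
    · rw [a1 hh]
    · exact absurd hh (hsep _ (d1 x) _ (d2 y)).1
    · exact absurd hh.symm (hsep _ (d1 y) _ (d2 x)).1
    · rw [a2 hh]
  · rintro ⟨b, x⟩ ⟨c, y⟩
    cases b <;> cases c <;> simp [dbl]
    · exact b1 x y
    · exact (hsep _ (d1 x) _ (d2 y)).2
    · exact fun hh => (hsep _ (d1 y) _ (d2 x)).2 hh.symm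
    · exact b2 x y
  · rintro ⟨b, x⟩
    have e1 := c1 x; have e2 := c2 x
    cases b <;> simp [dbl]
    · simpa using e1
    · rw [← e2]; cases ε <;> simp
  · rintro ⟨b, x⟩
    cases b <;> simp
    · exact hQ1 (d1 x)
    · exact hQ2 (d2 x)

theorem m1' {G : SimpleGraph ℕ} {side} {Q1 Q2 Q : Set ℕ} {H ε φ1 φ2} (h1 : Emb G (xs side ε) Q1 H φ1)
    (h2 : Emb G (xs side ε) Q2 H φ2) (hsep : Sep G Q1 Q2) (hQ1 : Q1 ⊆ Q) (hQ2 : Q2 ⊆ Q) :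
    HasS G side Q (dup H) := by
  obtain ⟨a1, b1, c1, d1⟩ := h1
  obtain ⟨a2, b2, c2, d2⟩ := h2
  refine ⟨ε, fun p => if p.1 then φ2 p.2 else φ1 p.2, ?_, ?_, ?_, ?_⟩
  · rintro ⟨b, x⟩ ⟨c, y⟩ hh
    cases b <;> cases c <;> simp at hh
    · rw [a1 hh]
    · exact absurd hh (hsep _ (d1 x) _ (d2 y)).1
    · exact absurd hh.symm (hsep _ (d1 y) _ (d2 x)).1
    · rw [a2 hh]
  · rintro ⟨b, x⟩ ⟨c, y⟩
    cases b <;> cases c <;> simp [dup]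
    · exact b1 x y
    · exact (hsep _ (d1 x) _ (d2 y)).2
    · exact fun hh => (hsep _ (d1 y) _ (d2 x)).2 hh.symm
    · exact b2 x y
  · rintro ⟨b, x⟩
    have e1 := c1 x; have e2 := c2 x
    cases b <;> simp [dup]
    · simpa using e1
    · simpa using e2
  · rintro ⟨b, x⟩
    cases b <;> simp
    · exact hQ1 (d1 x)
    · exact hQ2 (d2 x)

theorem flip1 {G : SimpleGraph ℕ} {side} {Q : Set ℕ} {H} (h : HasS G side Q (dbl H)) (ε : Bool) :
    ∃ φ, Emb G (xs side ε) Q (dbl H) φ := by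
  obtain ⟨ε', φ, a, b, c, d⟩ := h
  refine ⟨fun p => φ (xor p.1 (xor ε ε'), p.2), ?_, ?_, ?_, fun x => d _⟩
  · rintro ⟨x, x'⟩ ⟨y, y'⟩ hh
    have h0 := a hh
    have h1 := congrArg Prod.fst h0
    have h2 := congrArg Prod.snd h0
    simp only [Bool.xor_left_inj] at h1 h2
    rw [h1, h2]
  · rintro ⟨x, x'⟩ ⟨y, y'⟩
    refine (b _ _).trans ?_
    simp [dbl]
  · rintro ⟨x, x'⟩
    have := c (xor x (xor ε ε'), x')
    simp only [dbl, xs] at this ⊢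
    revert this
    cases side (φ (xor x (xor ε ε'), x')) <;> cases H.sd x' <;> cases x <;> cases ε <;> cases ε' <;> simp

theorem flip2 {G : SimpleGraph ℕ} {side} {Q : Set ℕ} {H} (h : HasS G side Q (dup (dbl H))) (ε : Bool) :
    ∃ φ, Emb G (xs side ε) Q (dup (dbl H)) φ := by
  obtain ⟨ε', φ, a, b, c, d⟩ := h
  refine ⟨fun p => φ (p.1, xor p.2.1 (xor ε ε'), p.2.2), ?_, ?_, ?_, fun x => d _⟩
  · rintro ⟨z, x, x'⟩ ⟨w, y, y'⟩ hh
    have h := a hh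
    have h0 := congrArg Prod.fst h
    have h1 := congrArg (fun p => p.2.1) h
    have h2 := congrArg (fun p => p.2.2) h
    simp only [Bool.xor_left_inj] at h0 h1 h2
    rw [h0, h1, h2]
  · rintro ⟨z, x, x'⟩ ⟨w, y, y'⟩
    refine (b _ _).trans ?_
    simp [dbl, dup]
  · rintro ⟨z, x, x'⟩
    have := c (z, xor x (xor ε ε'), x')
    simp only [dbl, dup, xs] at this ⊢
    revert this
    cases side (φ (z, xor x (xor ε ε'), x')) <;> cases H.sd x' <;> cases x <;> cases ε <;> cases ε' <;> simp

theorem m1 {G : SimpleGraph ℕ} {side} {Q1 Q2 Q : Set ℕ} {H} (h1 : HasS G side Q1 (dbl H))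
    (h2 : HasS G side Q2 (dbl H)) (hsep : Sep G Q1 Q2) (hQ1 : Q1 ⊆ Q) (hQ2 : Q2 ⊆ Q) :
    HasS G side Q (dup (dbl H)) := by
  obtain ⟨φ1, h1⟩ := flip1 h1 false
  obtain ⟨φ2, h2⟩ := flip1 h2 false
  exact m1' h1 h2 hsep hQ1 hQ2

theorem m2 {G : SimpleGraph ℕ} {side} (hs : Side G side) {K Q : Set ℕ} {k u : ℕ}
    (h : HasS G side K (pat k 2)) (huK : u ∉ K) (hu : ∀ t ∈ K, side t ≠ side u → G.Adj u t)
    (hKQ : K ⊆ Q) (huQ : u ∈ Q) : HasS G side Q (X (k + 1)) := by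
  obtain ⟨φ, a, b, c, d⟩ := flip2 h (side u)
  have hadj : ∀ x, G.Adj u (φ x) ↔ (dup (dbl (X k))).sd x = true := by
    intro x
    have hc := c x
    rw [← hc]
    constructor
    · intro hh
      have := hs _ _ hh
      revert this
      simp only [xs]
      cases side u <;> cases side (φ x) <;> simp
    · intro hh
      apply hu _ (d x)
      revert hh
      simp only [xs]
      cases side u <;> cases side (φ x) <;> simp
  refine ⟨side u, fun p => match p with | none => u | some x => φ x, ?_, ?_, ?_, ?_⟩
  · rintro (_ | x) (_ | y) hh
    · rfl
    · exact absurd (show φ y ∈ K from d y) (by rw [← (show u = φ y from hh)]; exact huK)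
    · exact absurd (show φ x ∈ K from d x) (by rw [(show φ x = u from hh)]; exact huK)
    · exact congrArg some (a hh)
  · rintro (_ | x) (_ | y)
    · simp [X, cone]
    · exact hadj y
    · exact (G.adj_comm _ _).trans (hadj x)
    · exact b x y
  · rintro (_ | x)
    · simp [X, cone]
    · exact c x
  · rintro (_ | x)
    · exact huQ
    · exact hKQ (d x)

end OnlineP9

namespace OnlineP9

def NoP5 (G : SimpleGraph ℕ) (y : ℕ) (D : Set ℕ) : Prop :=
  ∀ x1 ∈ D, ∀ x2 ∈ D, ∀ x3 ∈ D, ∀ x4 ∈ D, G.Adj y x1 → G.Adj x1 x2 → G.Adj x2 x3 → G.Adj x3 x4 →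
    ¬ G.Adj y x3 → G.Adj x1 x4

theorem twinfree9 : ∀ a b : Fin 9, (∀ c : Fin 9, (a.val + 1 = c.val ∨ c.val + 1 = a.val) ↔
    (b.val + 1 = c.val ∨ c.val + 1 = b.val)) → a = b := by
  decide

theorem lemA {G : SimpleGraph ℕ} {side} (hs : Side G side) (hP : PFree G 9) {y : ℕ} {D1 D2 : Set ℕ}
    (hsep : Sep G D1 D2) : NoP5 G y D1 ∨ NoP5 G y D2 := by
  by_contra hcon
  rw [not_or] at hcon
  obtain ⟨h1, h2⟩ := hcon
  unfold NoP5 at h1 h2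
  push Not at h1 h2
  obtain ⟨x1, X1, x2, X2, x3, X3, x4, X4, a1, a2, a3, a4, a5, a6⟩ := h1
  obtain ⟨z1, Z1, z2, Z2, z3, Z3, z4, Z4, b1, b2, b3, b4, b5, b6⟩ := h2
  have hns : ∀ {a b}, side a = side b → ¬ G.Adj a b := fun h h' => hs _ _ h' h
  have tr : ∀ {a b c}, G.Adj a b → G.Adj b c → side a = side c := by
    intro a b c h1 h2
    have h1 := hs _ _ h1
    have h2 := hs _ _ h2
    revert h1 h2
    cases side a <;> cases side b <;> cases side c <;> simp
  have c1 := tr a1 a2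
  have c2 := tr a2 a3
  have c3 := tr a3 a4
  have d1 := tr b1 b2
  have d2 := tr b2 b3
  have d3 := tr b3 b4
  have e1 := tr a1.symm b1
  have n1 : ¬ G.Adj y x2 := hns c1
  have n2 : ¬ G.Adj y x4 := hns (c1.trans c3)
  have n3 : ¬ G.Adj x1 x3 := hns c2
  have n4 : ¬ G.Adj x2 x4 := hns c3
  have n5 : ¬ G.Adj y z2 := hns d1
  have n6 : ¬ G.Adj y z4 := hns (d1.trans d3)
  have n7 : ¬ G.Adj z1 z3 := hns d2
  have n8 : ¬ G.Adj z2 z4 := hns d3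
  have hX : ∀ {a b}, a ∈ D1 → b ∈ D2 → ¬ G.Adj a b := fun ha hb => (hsep _ ha _ hb).2
  have sy : ∀ {a b}, ¬ G.Adj a b → ¬ G.Adj b a := fun h h' => h h'.symm
  let f : Fin 9 → ℕ := ![x4, x3, x2, x1, y, z1, z2, z3, z4]
  have hadj : ∀ a b : Fin 9, G.Adj (f a) (f b) ↔ (a.val + 1 = b.val ∨ b.val + 1 = a.val) := by
    intro a b
    fin_cases a <;> fin_cases b <;>
      simp [f, a1, a2, a3, a4, a5, a6, b1, b2, b3, b4, b5, b6, a1.symm, a2.symm, a3.symm, a4.symm,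
        b1.symm, b2.symm, b3.symm, b4.symm, sy a5, sy a6, sy b5, sy b6, n1, n2, n3, n4, n5, n6, n7, n8,
        sy n1, sy n2, sy n3, sy n4, sy n5, sy n6, sy n7, sy n8, hX X1 Z1, hX X1 Z2, hX X1 Z3, hX X1 Z4,
        hX X2 Z1, hX X2 Z2, hX X2 Z3, hX X2 Z4, hX X3 Z1, hX X3 Z2, hX X3 Z3, hX X3 Z4, hX X4 Z1,
        hX X4 Z2, hX X4 Z3, hX X4 Z4, sy (hX X1 Z1), sy (hX X1 Z2), sy (hX X1 Z3), sy (hX X1 Z4),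
        sy (hX X2 Z1), sy (hX X2 Z2), sy (hX X2 Z3), sy (hX X2 Z4), sy (hX X3 Z1), sy (hX X3 Z2),
        sy (hX X3 Z3), sy (hX X3 Z4), sy (hX X4 Z1), sy (hX X4 Z2), sy (hX X4 Z3), sy (hX X4 Z4)]
  apply hP
  refine ⟨f, fun a b hab => twinfree9 a b fun c => ?_, hadj⟩
  rw [← hadj, ← hadj, hab]

theorem side_tri {G : SimpleGraph ℕ} {side} (hs : Side G side) {a b : ℕ} (h : G.Adj a b) (c : ℕ) :
    side b = side c ↔ side a ≠ side c := by
  have := hs _ _ h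
  revert this
  cases side a <;> cases side b <;> cases side c <;> simp

theorem lemB {G : SimpleGraph ℕ} {side} (hs : Side G side) {y z : ℕ} {D : Set ℕ} (hD : Conn G D)
    (hz : z ∈ D) (hyz : G.Adj y z) (hno : NoP5 G y D) {e : ℕ} (he : e ∈ D) (hse : side e = side y) :
    ∃ x ∈ D, G.Adj y x ∧ G.Adj x e := by
  have key := hD z hz (fun t =>
    (side t ≠ side y → (G.Adj y t ∨ ∃ x1 ∈ D, ∃ x2 ∈ D, G.Adj y x1 ∧ G.Adj x1 x2 ∧ G.Adj x2 t)) ∧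
    (side t = side y → ∃ x ∈ D, G.Adj y x ∧ G.Adj x t)) ?_ ?_ e he
  · exact key.2 hse
  · exact ⟨fun _ => Or.inl hyz, fun h => absurd h.symm (hs _ _ hyz)⟩
  · rintro a ha b hb hab ⟨h1, h2⟩
    constructor
    · intro hb'
      have ha' : side a = side y := by
        by_contra hc; exact hb' ((side_tri hs hab y).2 hc)
      obtain ⟨x, hx, hyx, hxa⟩ := h2 ha'
      exact Or.inr ⟨x, hx, a, ha, hyx, hxa, hab⟩
    · intro hb'
      by_cases hya : G.Adj y a
      · exact ⟨a, ha, hya, hab⟩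
      · rcases h1 ((side_tri hs hab y).1 hb') with h | ⟨x1, hx1, x2, hx2, e1, e2, e3⟩
        · exact absurd h hya
        · exact ⟨x1, hx1, e1, hno x1 hx1 x2 hx2 a ha b hb e1 e2 e3 hab hya⟩

theorem lemC {G : SimpleGraph ℕ} {side} (hs : Side G side) {y z : ℕ} {D D' : Set ℕ} (hD : Conn G D)
    (hz : z ∈ D) (hyz : G.Adj y z) (hno : NoP5 G y D) (hD' : Conn G D') (hsub : D' ⊆ D)
    (hN : ∀ t ∈ D', ¬ G.Adj y t) {e : ℕ} (he : e ∈ D') (hse : side e = side y) :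
    ∃ u ∈ D, u ∉ D' ∧ side u ≠ side y ∧ ∀ t ∈ D', side t = side y → G.Adj u t := by
  obtain ⟨u, hu, hyu, hue⟩ := lemB hs hD hz hyz hno (hsub he) hse
  refine ⟨u, hu, fun h => hN u h hyu, (hs _ _ hyu).symm, ?_⟩
  have key := hD' e he (fun t => (side t = side y → G.Adj u t) ∧
    (side t ≠ side y → ∃ s ∈ D', G.Adj u s ∧ G.Adj s t)) ?_ ?_
  · exact fun t ht => (key t ht).1
  · exact ⟨fun _ => hue, fun h => absurd hse h⟩
  · rintro a ha b hb hab ⟨h1, h2⟩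
    constructor
    · intro hb'
      obtain ⟨s, hs', e1, e2⟩ := h2 ((side_tri hs hab y).1 hb')
      exact hno u hu s (hsub hs') a (hsub ha) b (hsub hb) hyu e1 e2 hab (hN a ha)
    · intro hb'
      have ha' : side a = side y := by
        by_contra hc; exact hb' ((side_tri hs hab y).2 hc)
      exact ⟨a, ha, h1 ha', hab⟩

theorem ne_ne {a b c : Bool} (h : a ≠ b) (h' : c ≠ b) : a = c := by
  cases a <;> cases b <;> cases c <;> simp_all

theorem lemD {G : SimpleGraph ℕ} {side} (hs : Side G side) {y z w r : ℕ} (hzy : z < y)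
    (hyz : G.Adj y z) (hno : NoP5 G y (comp G y z)) {Q : Set ℕ} (hQ : comp G y z ⊆ Q)
    (hr : ¬ HasS G side Q (X (r + 1))) (hw : w ∈ comp G y z) (hwM : w ∈ Mset G r)
    (hsw : side w ≠ side y) : G.Adj y w := by
  obtain ⟨a1, a2, h1, l1, h2, l2, hsep, g1, g2⟩ := hwM
  have hwy : w < y := comp_lt hzy hw
  have hCw : C G w ⊆ comp G y z := C_sub hw hwy
  have haC : ∀ a, a < w → G.Adj w a → a ∈ C G w := fun a ha hwa =>
    adj_mem_comp (self_mem_comp G (w + 1) w) (by omega) (by omega) hwa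
  have ha1 := haC a1 l1 h1
  have ha2 := haC a2 l2 h2
  have hR : comp G w a1 ⊆ comp G y z := by
    refine (comp_mono G hwy.le a1).trans ?_
    rw [comp_eq (hCw ha1)]
  have sa1 : side a1 = side y := ne_ne (hs _ _ h1).symm hsw.symm
  have hz1 : ∃ t ∈ comp G w a1, G.Adj y t := by
    by_contra hcon
    push Not at hcon
    obtain ⟨u, hu, huD, hsu, huc⟩ := lemC hs (comp_conn G y z) (self_mem_comp G y z) hyz hno
      (comp_conn G w a1) hR hcon (self_mem_comp G w a1) sa1
    apply hr
    have g1' := (Has_iff hs (comp_conn G w a1)).1 g1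
    rw [Set.inter_univ] at g1'
    exact m2 hs g1' huD (fun t ht hst => huc t ht (ne_ne hst hsu.symm)) (hR.trans hQ) (hQ hu)
  by_contra hyw
  obtain ⟨t, ht, hyt⟩ := hz1
  have hno' : NoP5 G y (C G w) := fun x1 H1 x2 H2 x3 H3 x4 H4 =>
    hno x1 (hCw H1) x2 (hCw H2) x3 (hCw H3) x4 (hCw H4)
  have htC : t ∈ C G w := by
    have := comp_mono G (Nat.le_succ w) a1 ht
    rw [comp_eq (n := w + 1) ha1] at this
    exact this
  obtain ⟨x, hx, hyx, hxa⟩ := lemB hs (comp_conn G (w + 1) w) htC hyt hno' ha1 sa1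
  have hxw : x < w := by
    have := C_lt hx
    rcases Nat.lt_or_ge x w with h | h
    · exact h
    · have : x = w := by omega
      exact absurd (this ▸ hyx) hyw
  have hxa2 := hno' x hx a1 ha1 w (mem_C_self G w) a2 ha2 hyx hxa h1.symm h2 hyw
  apply hsep
  exact (SimpleGraph.Adj.reachable (G := T G w) ⟨l1, hxw, hxa.symm⟩).trans
    (SimpleGraph.Adj.reachable (G := T G w) ⟨hxw, l2, hxa2⟩)

theorem sep_comp {G : SimpleGraph ℕ} {y u u' : ℕ} (hu : u < y) (hu' : u' < y)
    (h : ¬ (T G y).Reachable u u') : Sep G (comp G y u) (comp G y u') := by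
  intro a ha b hb
  constructor
  · rintro rfl
    exact h (SimpleGraph.Reachable.trans ha (SimpleGraph.Reachable.symm hb))
  · intro hab
    have := adj_mem_comp ha (comp_lt hu ha) (comp_lt hu' hb) hab
    exact h (SimpleGraph.Reachable.trans this (SimpleGraph.Reachable.symm hb))

theorem nbr {G : SimpleGraph ℕ} {y u u' : ℕ} (h : (T G (y + 1)).Reachable u u')
    (h' : ¬ (T G y).Reachable u u') (hu : u < y) : ∃ x < y, G.Adj y x ∧ x ∈ comp G y u := by
  by_contra hcon
  push Not at hcon
  apply h'
  rw [SimpleGraph.reachable_iff_reflTransGen] at h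
  clear h'
  induction h with
  | refl => exact SimpleGraph.Reachable.refl u
  | @tail a b _ h2 ih =>
    have ha := comp_lt hu ih
    by_cases hb : b < y
    · exact adj_mem_comp (x := u) ih ha hb h2.2.2
    · have : b = y := by have := h2.2.1; omega
      subst this
      exact absurd ih (hcon a ha h2.2.2.symm)

end OnlineP9

namespace OnlineP9

theorem X_inj (k : ℕ) : ∃ g : Fin (k + 1) → (X k).V, Function.Injective g := by
  induction k with
  | zero => exact ⟨fun _ => (), fun a b _ => Fin.ext (by omega)⟩
  | succ k ih =>
    obtain ⟨g, hg⟩ := ih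
    let h : Fin (k + 1) → (X (k + 1)).V := fun i => some (false, false, g i)
    have hh : Function.Injective h := by
      intro a b hab
      have h1 := Option.some.inj hab
      exact hg (congrArg (fun p => p.2.2) h1)
    refine ⟨Fin.cons (α := fun _ => (X (k + 1)).V) (root (k + 1)) h, ?_⟩
    refine Fin.cons_injective_iff.2 ⟨?_, hh⟩
    rintro ⟨i, hi⟩
    exact Option.some_ne_none _ hi

theorem Has_bound {G : SimpleGraph ℕ} {S P : Set ℕ} {n k : ℕ} (hS : ∀ z ∈ S, z < n)
    (h : Has G S P (X k)) : k < n := by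
  obtain ⟨f, -, φ, a, -, -, d⟩ := h
  obtain ⟨g, hg⟩ := X_inj k
  have := Fintype.card_le_of_injective (fun i => (⟨φ (g i), hS _ (d _).1⟩ : Fin n))
    (fun i j hij => hg (a (congrArg Fin.val hij)))
  simpa using this

theorem bdd_spec {p : ℕ → Prop} {n : ℕ} (h0 : ∃ k, p k) (hb : ∀ k, p k → k ≤ n) :
    p (sSup {k | p k}) ∧ ¬ p (sSup {k | p k} + 1) := by
  have hbd : BddAbove {k | p k} := ⟨n, fun k hk => hb k hk⟩
  refine ⟨Nat.sSup_mem (s := {k | p k}) h0 hbd, fun h => ?_⟩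
  have := le_csSup hbd (show sSup {k | p k} + 1 ∈ {k | p k} from h)
  omega

theorem has_pt {G : SimpleGraph ℕ} {side} (hs : Side G side) {S P : Set ℕ} {v : ℕ} (hv : v ∈ S)
    (hP : v ∈ P) : Has G S P (X 0) := by
  refine ⟨_, hs.prop2 (side v) S, fun _ => v, ?_, ?_, ?_, ?_⟩
  · intro a b _; exact Subsingleton.elim (α := Unit) a b
  · intro a b; simp [X, pt]
  · intro a; simp [X, pt]
  · intro a; exact ⟨hv, hP⟩

theorem st_spec {G : SimpleGraph ℕ} {side} (hs : Side G side) (v : ℕ) {r j q : ℕ}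
    (h : st G v = (r, j, q)) :
    Str G (C G v) r j 0 ∧ Str G (C G v) r j q ∧ Has G (C G v) Set.univ (X r) ∧
    ¬ Has G (C G v) Set.univ (X (r + 1)) ∧ ¬ Str G (C G v) r (j + 1) 0 ∧
    (q = 0 ∨ q = 1 ∨ q = 2) ∧ (q = 0 → ¬ Str G (C G v) r j 1) ∧ (q = 1 → ¬ Str G (C G v) r j 2) := by
  have hS : ∀ z ∈ C G v, z < v + 1 := fun z hz => C_lt hz
  obtain ⟨h1, h2⟩ := bdd_spec (p := fun k => Has G (C G v) Set.univ (X k)) (n := v + 1)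
    ⟨0, has_pt hs (mem_C_self G v) trivial⟩ (fun k hk => (Has_bound hS hk).le)
  unfold st at h
  simp only [Prod.mk.injEq] at h
  obtain ⟨hr, hj, hq⟩ := h
  change Has G (C G v) Set.univ (X (rOf G (C G v))) at h1
  change ¬ Has G (C G v) Set.univ (X (rOf G (C G v) + 1)) at h2
  rw [hr] at h1 h2 hj hq
  obtain ⟨h3, h4⟩ := bdd_spec (p := fun j => Str G (C G v) r j 0) (n := v + 1)
    ⟨0, h1⟩ (fun k hk => by
      cases k with
      | zero => omega
      | succ i => exact Has_bound hS hk)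
  change Str G (C G v) r (jOf G (C G v) r) 0 at h3
  change ¬ Str G (C G v) r (jOf G (C G v) r + 1) 0 at h4
  rw [hj] at h3 h4 hq
  unfold qOf at hq
  split_ifs at hq with i1 i2 <;> subst hq
  · exact ⟨h3, i1, h1, h2, h4, by simp, by simp, by simp⟩
  · exact ⟨h3, i2, h1, h2, h4, by simp, by simp, fun _ => i1⟩
  · exact ⟨h3, h3, h1, h2, h4, by simp, fun _ => i2, by simp⟩

theorem anchor_spec {G : SimpleGraph ℕ} {side} (hs : Side G side) (u : ℕ) {r j q : ℕ}
    (h : st G u = (r, j, q)) :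
    ∃ φ, Emb G (xs side (side (anchor G u))) (C G u ∩ Pset G r j) (X (idx r j)) φ ∧
      φ (root (idx r j)) = anchor G u := by
  obtain ⟨f, hf, φ, hφ⟩ := (st_spec hs u h).1
  have : Anch G (C G u) (st G u).1 (st G u).2.1 (anchor G u) := by
    refine Nat.sInf_mem (s := {a | Anch G (C G u) (st G u).1 (st G u).2.1 a}) ?_
    rw [h]
    exact ⟨_, f, hf, φ, hφ, rfl⟩
  rw [h] at this
  obtain ⟨f, hf, φ, hφ, hroot⟩ := this
  obtain ⟨ε, hε⟩ := rigid hs (comp_conn G (u + 1) u) hf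
  have hφ' := hφ.congr fun z hz => hε z hz.1
  have h1 := hφ'.2.2.1 (root (idx r j))
  change φ (root (idx r j)) = anchor G u at hroot
  rw [hroot, root_sd] at h1
  have : ε = side (anchor G u) := by
    revert h1; simp only [xs]; cases ε <;> cases side (anchor G u) <;> simp
  rw [← this]
  exact ⟨φ, hφ', hroot⟩

theorem good1 {G : SimpleGraph ℕ} {side} (hs : Side G side) {u y r j : ℕ} (huy : u < y)
    (h : Str G (C G u) r j 2) : HasS G side (comp G y u) (pat r 2) := by
  have hsub : C G u ⊆ comp G y u := C_sub (self_mem_comp G y u) huy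
  cases j with
  | zero =>
    have h := (Has_iff hs (comp_conn G (u + 1) u)).1 h
    exact h.mono (Set.inter_subset_left.trans hsub)
  | succ i =>
    obtain ⟨f, -, φ, -, -, -, d⟩ := h
    obtain ⟨hw, x1, x2, h1, l1, -, -, -, g1, -⟩ := d (false, false, root i)
    have h := (Has_iff hs (comp_conn G _ x1)).1 g1
    refine h.mono (Set.inter_subset_left.trans ?_)
    have hw' := hsub hw
    have hwy := comp_lt huy hw'
    refine (comp_mono G hwy.le x1).trans ?_
    rw [comp_eq (adj_mem_comp hw' hwy (l1.trans hwy) h1)]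

def IsFirst (G : SimpleGraph ℕ) (u : ℕ) : Prop := ∀ x ∈ C G u, st G x = st G u → u ≤ x

theorem C_trans {G : SimpleGraph ℕ} {u v : ℕ} (hu : u ∈ C G v) : C G u ⊆ C G v :=
  C_sub hu (C_lt hu)

theorem first_isFirst (G : SimpleGraph ℕ) (v : ℕ) : IsFirst G (first G v) := by
  intro x hx hst
  obtain ⟨h1, h2⟩ := first_mem G v
  exact first_le G (C_trans h1 hx) (hst.trans h2)

theorem consistency {G : SimpleGraph ℕ} {side} (hs : Side G side) (hP : PFree G 9) {u u' v : ℕ}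
    (hu : u ∈ C G v) (hu' : u' ∈ C G v) (su : st G u = st G v) (su' : st G u' = st G v)
    (fu : IsFirst G u) (fu' : IsFirst G u') : side (anchor G u) = side (anchor G u') := by
  by_cases hne : u = u'
  · rw [hne]
  classical
  have hex : ∃ n, (T G n).Reachable u u' :=
    ⟨v + 1, SimpleGraph.Reachable.trans (SimpleGraph.Reachable.symm hu) hu'⟩
  obtain ⟨n, hn, hmin⟩ : ∃ n, (T G n).Reachable u u' ∧ ∀ m < n, ¬ (T G m).Reachable u u' :=
    ⟨Nat.find hex, Nat.find_spec hex, fun m hm => Nat.find_min hex hm⟩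
  have hnv : n ≤ v + 1 := by
    by_contra hc
    exact hmin (v + 1) (by omega) (SimpleGraph.Reachable.trans (SimpleGraph.Reachable.symm hu) hu')
  have lt_of : ∀ {a b n}, a ≠ b → (T G n).Reachable a b → a < n := by
    intro a b n hab h
    rw [SimpleGraph.reachable_iff_reflTransGen] at h
    rcases Relation.ReflTransGen.cases_head h with h | ⟨c, h, -⟩
    · exact absurd h hab
    · exact h.1
  have hun := lt_of hne hn
  have hun' := lt_of (Ne.symm hne) hn.symm
  obtain ⟨y, rfl⟩ : ∃ y, n = y + 1 := ⟨n - 1, by omega⟩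
  have hnr : ¬ (T G y).Reachable u u' := hmin y (by omega)
  have huy : u < y := by
    rcases Nat.lt_or_ge u y with h | h
    · exact h
    · have : u = y := by omega
      subst this
      have := fu u' hn (su'.trans su.symm)
      omega
  have huy' : u' < y := by
    rcases Nat.lt_or_ge u' y with h | h
    · exact h
    · have : u' = y := by omega
      subst this
      have := fu' u hn.symm (su.trans su'.symm)
      omega
  obtain ⟨x1, l1, a1, m1x⟩ := nbr hn hnr huy
  obtain ⟨x2, l2, a2, m2x⟩ := nbr hn.symm (fun h => hnr h.symm) huy'
  have hsep := sep_comp huy huy' hnr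
  have hCu : C G u ⊆ comp G y u := C_sub (self_mem_comp G y u) huy
  have hCu' : C G u' ⊆ comp G y u' := C_sub (self_mem_comp G y u') huy'
  have hDv : comp G y u ⊆ C G v := by
    refine (comp_mono G (by omega : y ≤ v + 1) u).trans ?_
    rw [comp_eq (n := v + 1) hu]; exact subset_rfl
  have hDv' : comp G y u' ⊆ C G v := by
    refine (comp_mono G (by omega : y ≤ v + 1) u').trans ?_
    rw [comp_eq (n := v + 1) hu']; exact subset_rfl
  have hyv : y ∈ C G v := adj_mem_comp (x := v) (hDv m1x) (by omega) (by omega) a1.symm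
  obtain ⟨r, j, q, hst⟩ : ∃ r j q, st G v = (r, j, q) := ⟨_, _, _, rfl⟩
  obtain ⟨-, -, v3, v4, v5, v6, v7, v8⟩ := st_spec hs v hst
  obtain ⟨-, s2, -⟩ := st_spec hs u (su.trans hst)
  obtain ⟨-, s2', -⟩ := st_spec hs u' (su'.trans hst)
  have hCv := comp_conn G (v + 1) v
  have hsepC : Sep G (C G u ∩ Pset G r j) (C G u' ∩ Pset G r j) :=
    fun a ha b hb => hsep a (hCu ha.1) b (hCu' hb.1)
  have i1 : C G u ∩ Pset G r j ⊆ C G v ∩ Pset G r j :=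
    fun a ha => ⟨hDv (hCu ha.1), ha.2⟩
  have i2 : C G u' ∩ Pset G r j ⊆ C G v ∩ Pset G r j :=
    fun a ha => ⟨hDv' (hCu' ha.1), ha.2⟩
  by_contra hcon
  rcases v6 with rfl | rfl | rfl
  · apply v7 rfl
    obtain ⟨φ, hφ, -⟩ := anchor_spec hs u (su.trans hst)
    obtain ⟨φ', hφ', -⟩ := anchor_spec hs u' (su'.trans hst)
    have : side (anchor G u') = !side (anchor G u) := by
      revert hcon; cases side (anchor G u) <;> cases side (anchor G u') <;> simp
    rw [this] at hφ'
    exact (Has_iff hs hCv).2 (m0 hφ hφ' hsepC i1 i2)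
  · apply v8 rfl
    exact (Has_iff hs hCv).2 (m1 ((Has_iff hs (comp_conn G _ u)).1 s2)
      ((Has_iff hs (comp_conn G _ u')).1 s2') hsepC i1 i2)
  · have g1 := good1 hs huy s2
    have g2 := good1 hs huy' s2'
    have hyM : y ∈ Mset G r := by
      refine ⟨x1, x2, a1, l1, a2, l2, ?_, ?_, ?_⟩
      · intro h
        exact hnr (SimpleGraph.Reachable.trans m1x
          (h.trans (SimpleGraph.Reachable.symm m2x)))
      · rw [comp_eq m1x]
        exact (Has_iff hs (comp_conn G _ _)).2 (by rwa [Set.inter_univ])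
      · rw [comp_eq m2x]
        exact (Has_iff hs (comp_conn G _ _)).2 (by rwa [Set.inter_univ])
    apply v5
    cases j with
    | zero => exact has_pt hs hyv hyM
    | succ i =>
      have hrX : ¬ HasS G side (C G v) (X (r + 1)) := fun h =>
        v4 ((Has_iff hs hCv).2 (by rwa [Set.inter_univ]))
      refine (Has_iff hs hCv).2 ?_
      change HasS G side (C G v ∩ Mset G r) (X (i + 1))
      have fin : ∀ w x, w < y → C G w ⊆ comp G y w → comp G y w ⊆ C G v → x < y → G.Adj y x →
          x ∈ comp G y w → Str G (C G w) r (i + 1) 2 → NoP5 G y (comp G y w) →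
          HasS G side (C G v ∩ Mset G r) (X (i + 1)) := by
        intro w x hwy k1 k2 hx hyx hxw hstr hno
        refine m2 hs ((Has_iff hs (comp_conn G _ w)).1 hstr) ?_ ?_ ?_ ?_ (u := y)
        · intro h
          exact absurd (comp_lt hwy (k1 h.1)) (lt_irrefl y)
        · rintro t ⟨ht, htM⟩ hst
          rw [← comp_eq hxw] at hno
          refine lemD hs hx hyx hno (Q := C G v) ?_ hrX ?_ htM hst
          · rw [comp_eq hxw]; exact k2
          · rw [comp_eq hxw]; exact k1 ht
        · rintro t ⟨ht, htM⟩
          exact ⟨k2 (k1 ht), htM⟩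
        · exact ⟨hyv, hyM⟩
      rcases lemA hs hP hsep (y := y) with hno | hno
      · exact fin u x1 huy hCu hDv l1 a1 m1x s2 hno
      · exact fin u' x2 huy' hCu' hDv' l2 a2 m2x s2' hno

theorem anchor_mem {G : SimpleGraph ℕ} {side} (hs : Side G side) (u : ℕ) : anchor G u ∈ C G u := by
  obtain ⟨φ, hφ, h⟩ := anchor_spec hs u (rfl : st G u = (_, _, _))
  rw [← h]
  exact (hφ.2.2.2 _).1

theorem bit_iff {G : SimpleGraph ℕ} {side} (hs : Side G side) (v : ℕ) :
    bit G v = if side v = side (anchor G (first G v)) then 1 else 0 := by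
  unfold bit
  have : (∃ f, Prop2 G f (C G v) ∧ f v = f (anchor G (first G v))) ↔
      side v = side (anchor G (first G v)) := by
    constructor
    · rintro ⟨f, hf, h⟩
      obtain ⟨ε, hε⟩ := rigid hs (comp_conn G (v + 1) v) hf
      rw [hε v (mem_C_self G v), hε _ (C_trans (first_mem G v).1 (anchor_mem hs _))] at h
      simpa [xs] using h
    · intro h
      refine ⟨_, hs.prop2 false _, ?_⟩
      simpa [xs] using h
  simp only [this]

theorem proper_lt {G : SimpleGraph ℕ} {side} (hs : Side G side) (hP : PFree G 9) {x v : ℕ} (hxv : x < v)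
    (h : G.Adj x v) (h1 : st G x = st G v) (h2 : bit G x = bit G v) : False := by
  have hx : x ∈ C G v :=
    adj_mem_comp (self_mem_comp G (v + 1) v) (by omega) (by omega) h.symm
  have hc := consistency hs hP (C_trans hx (first_mem G x).1) (first_mem G v).1
    ((first_mem G x).2.trans h1) (first_mem G v).2 (first_isFirst G x) (first_isFirst G v)
  rw [bit_iff hs, bit_iff hs, hc] at h2
  have := hs _ _ h
  revert this h2
  cases side x <;> cases side v <;> cases side (anchor G (first G v)) <;> simp

theorem colr_proper_lt {G : SimpleGraph ℕ} {x v : ℕ} (hxv : x < v) (h : G.Adj x v) :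
    colr G x ≠ colr G v := by
  intro heq
  by_cases hv : Good (T G (v + 1))
  · have hx : Good (T G (x + 1)) := by
      rw [← T_T G (show x + 1 ≤ v + 1 by omega)]
      exact Good_T hv _
    unfold colr at heq
    rw [if_pos hx, if_pos hv] at heq
    have h1 := Encodable.encode_injective (Nat.eq_of_mul_eq_mul_left (by omega) heq)
    simp only [Prod.mk.injEq] at h1
    obtain ⟨hP, side, hs⟩ := hv
    rw [← st_T G (show x < v + 1 by omega), ← st_T G (show v < v + 1 by omega),
      ← bit_T G (show x < v + 1 by omega), ← bit_T G (show v < v + 1 by omega)] at h1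
    exact proper_lt (G := T G (v + 1)) hs hP hxv ⟨by omega, by omega, h⟩ h1.1 h1.2
  · unfold colr at heq
    rw [if_neg hv] at heq
    split_ifs at heq <;> omega

theorem colr_proper {G : SimpleGraph ℕ} {x v : ℕ} (h : G.Adj x v) : colr G x ≠ colr G v := by
  rcases Nat.lt_trichotomy x v with hl | rfl | hl
  · exact colr_proper_lt hl h
  · exact absurd h (G.loopless.irrefl x)
  · exact (colr_proper_lt hl h.symm).symm

/-! the algorithm -/

def ext {n : ℕ} (G : SimpleGraph (Fin n)) : SimpleGraph ℕ where
  Adj x y := ∃ (hx : x < n) (hy : y < n), G.Adj ⟨x, hx⟩ ⟨y, hy⟩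
  symm := ⟨fun _ _ ⟨a, b, c⟩ => ⟨b, a, c.symm⟩⟩
  loopless := ⟨fun _ ⟨_, _, c⟩ => G.loopless.irrefl _ c⟩

noncomputable def alg : OnlineAlg := fun k H => colr (ext H) k

theorem run_alg {n : ℕ} (G : SimpleGraph (Fin n)) (i : Fin n) : runColor alg G i = colr (ext G) i := by
  unfold runColor alg
  rw [← colr_T (ext G) (show i.val < i.val + 1 by omega)]
  congr 1
  ext x y
  constructor
  · rintro ⟨hx, hy, h⟩
    exact ⟨hx, hy, by omega, by omega, h⟩
  · rintro ⟨hx, hy, _, _, h⟩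
    exact ⟨hx, hy, h⟩

theorem alg_proper : IsProperAlg alg := by
  intro n G i j h
  rw [run_alg, run_alg]
  exact colr_proper ⟨i.2, j.2, h⟩

theorem ext_good {V : Type} (G : SimpleGraph V) (hP : PFree G 9)
    (hb : ∃ side : V → Bool, ∀ x y, G.Adj x y → side x ≠ side y) {n : ℕ} (π : Fin n ≃ V) :
    Good (ext (G.comap π)) := by
  constructor
  · rintro ⟨f, hf, hadj⟩
    apply hP
    have hlt : ∀ a, f a < n := by
      intro a
      have : ∃ b : Fin 9, (a.val + 1 = b.val ∨ b.val + 1 = a.val) := by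
        by_cases ha : a.val = 0
        · exact ⟨1, Or.inl (by simp [ha])⟩
        · exact ⟨⟨a.val - 1, by omega⟩, Or.inr (by simp; omega)⟩
      obtain ⟨b, hb⟩ := this
      exact ((hadj a b).2 hb).1
    refine ⟨fun a => π ⟨f a, hlt a⟩, ?_, fun a b => ?_⟩
    · intro a b hab
      exact hf (congrArg Fin.val (π.injective hab))
    · rw [← hadj a b]
      constructor
      · intro h; exact ⟨hlt a, hlt b, h⟩
      · rintro ⟨_, _, h⟩; exact h
  · obtain ⟨s, hs⟩ := hb
    refine ⟨fun x => if hx : x < n then s (π ⟨x, hx⟩) else false, ?_⟩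
    rintro x y ⟨hx, hy, h⟩
    simp only [dif_pos hx, dif_pos hy]
    exact hs _ _ h

theorem has_le {V : Type} [Fintype V] (G : SimpleGraph V) {n : ℕ} (π : Fin n ≃ V) {S P : Set ℕ} {k : ℕ}
    (hS : ∀ z ∈ S, z < n) (h : Has (ext (G.comap π)) S P (X k)) : k + 1 ≤ onlineChrom V G := by
  obtain ⟨f, -, φ, a, b, -, d⟩ := h
  refine lower G k (fun x => π ⟨φ x, hS _ (d x).1⟩) ?_ ?_
  · intro x y hxy
    exact a (congrArg Fin.val (π.injective hxy))
  · intro x y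
    rw [← b x y]
    constructor
    · intro h; exact ⟨hS _ (d x).1, hS _ (d y).1, h⟩
    · rintro ⟨_, _, h⟩; exact h

theorem count {V : Type} [Fintype V] (G : SimpleGraph V) (hP : PFree G 9)
    (hb : ∃ side : V → Bool, ∀ x y, G.Adj x y → side x ≠ side y) {n : ℕ} (π : Fin n ≃ V) :
    numColors alg (G.comap π) ≤ 6 * (onlineChrom V G + 1) ^ 2 := by
  classical
  have hg := ext_good G hP hb π
  set c := onlineChrom V G with hc
  let F : Finset ℕ := ((Finset.range (c + 1) ×ˢ Finset.range (c + 1) ×ˢ Finset.range 3) ×ˢ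
    Finset.range 2).image (fun p => 2 * Encodable.encode p)
  have hsub : Finset.univ.image (runColor alg (G.comap π)) ⊆ F := by
    intro x hx
    obtain ⟨i, -, rfl⟩ := Finset.mem_image.1 hx
    rw [run_alg]
    unfold colr
    rw [if_pos (Good_T hg _)]
    refine Finset.mem_image.2 ⟨_, ?_, rfl⟩
    obtain ⟨-, side, hs⟩ := hg
    obtain ⟨r, j, q, hst⟩ : ∃ r j q, st (ext (G.comap π)) i = (r, j, q) := ⟨_, _, _, rfl⟩
    obtain ⟨v1, -, v3, -, -, v6, -⟩ := st_spec hs i hst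
    have hS : ∀ z ∈ C (ext (G.comap π)) i, z < n := fun z hz => by
      have := C_lt hz; omega
    have e1 := has_le G π hS v3
    have e2 := has_le G π hS v1
    have e3 : bit (ext (G.comap π)) i < 2 := by
      rw [bit_iff hs]; split_ifs <;> omega
    have e4 : j < c + 1 := by
      cases j with
      | zero => omega
      | succ i => simp only [idx] at e2; omega
    rw [hst]
    simp only [Finset.mem_product, Finset.mem_range]
    refine ⟨⟨by omega, e4, by omega⟩, e3⟩
  refine (Finset.card_le_card hsub).trans (Finset.card_image_le.trans ?_)
  simp only [Finset.card_product, Finset.card_range]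
  nlinarith

end OnlineP9

theorem stmt0 :
    ∃ A : OnlineAlg, IsProperAlg A ∧
      ∀ (V : Type) [Fintype V] (G : SimpleGraph V),
        PFree G 9 →
        (∃ side : V → Bool, ∀ x y, G.Adj x y → side x ≠ side y) →
        ∀ (n : ℕ) (π : Fin n ≃ V),
          numColors A (G.comap π) ≤ 6 * (onlineChrom V G + 1) ^ 2 := by
  exact ⟨OnlineP9.alg, OnlineP9.alg_proper, fun V _ G hP hb n π => OnlineP9.count G hP hb π⟩
end

section
/- If a finite graph G contains X_k as an induced subgraph, then the on-line chromatic number of G satisfies χ*(G) ≥ k. -/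
/-! ### The graphs `X_k` -/

/-- Vertex set of the graph `X_k` (with a junk value at `k = 0`). -/
def XV : ℕ → Type
  | 0 => PUnit
  | 1 => PUnit
  | 2 => Bool
  | (n+3) => Option (XV (n+2) ⊕ XV (n+2))

/-- The root of `X_k`. -/
def XRoot : (k : ℕ) → XV k
  | 0 => PUnit.unit
  | 1 => PUnit.unit
  | 2 => true
  | (_+3) => none

/-- The side of a vertex of `X_k`: `true` is the root side, `false` the non-root side. -/
def XSide : (k : ℕ) → XV k → Bool
  | 0, _ => true
  | 1, _ => true
  | 2, v => v
  | (_+3), none => true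
  | (n+3), some (Sum.inl x) => !(XSide (n+2) x)
  | (n+3), some (Sum.inr x) => XSide (n+2) x

/-- Base adjacency relation of `X_k`:  for `k ≥ 3`, `X_k` consists of two disjoint copies of
`X_{k-1}` with no edges in between, together with a root vertex joined to the root side of the
first copy and to the non-root side of the second copy. -/
def XRel : (k : ℕ) → XV k → XV k → Prop
  | 0, _, _ => False
  | 1, _, _ => False
  | 2, u, v => u ≠ v
  | (n+3), none, some (Sum.inl x) => XSide (n+2) x = true
  | (n+3), none, some (Sum.inr x) => XSide (n+2) x = false
  | (n+3), some (Sum.inl x), none => XSide (n+2) x = true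
  | (n+3), some (Sum.inr x), none => XSide (n+2) x = false
  | (n+3), some (Sum.inl x), some (Sum.inl y) => XRel (n+2) x y
  | (n+3), some (Sum.inr x), some (Sum.inr y) => XRel (n+2) x y
  | (_+3), _, _ => False

/-- The graph `X_k`. -/
def XGraph (k : ℕ) : SimpleGraph (XV k) := SimpleGraph.fromRel (XRel k)

/-- color of vertex `i` in an on-line graph on `ℕ`. -/
def colN (A : OnlineAlg) (H : SimpleGraph ℕ) (i : ℕ) : ℕ :=
  A i (H.comap (fun x : Fin (i+1) => x.val))

/-- agreement below `n` -/
def AgreeB (n : ℕ) (H H' : SimpleGraph ℕ) : Prop :=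
  ∀ a b, a < n → b < n → (H.Adj a b ↔ H'.Adj a b)

theorem colN_agree (A : OnlineAlg) {n : ℕ} {H H' : SimpleGraph ℕ} (h : AgreeB n H H')
    {i : ℕ} (hi : i < n) : colN A H i = colN A H' i := by
  unfold colN
  congr 1
  ext a b
  simp only [SimpleGraph.comap_adj]
  exact h _ _ (by omega) (by omega)

theorem colN_proper {A : OnlineAlg} (hA : IsProperAlg A) {H : SimpleGraph ℕ} {a b : ℕ}
    (h : H.Adj a b) : colN A H a ≠ colN A H b := by
  have := hA (a + b + 1) (H.comap (fun x : Fin (a+b+1) => x.val)) ⟨a, by omega⟩ ⟨b, by omega⟩ h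
  exact this

theorem xg_none_inl (j : ℕ) (x : XV (j+2)) :
    (XGraph (j+3)).Adj (none : Option (XV (j+2) ⊕ XV (j+2))) (some (Sum.inl x) : Option (XV (j+2) ⊕ XV (j+2))) ↔
      XSide (j+2) x = true := by
  refine (SimpleGraph.fromRel_adj (XRel (j+3)) _ _).trans ⟨?_, ?_⟩
  · rintro ⟨_, h | h⟩ <;> exact h
  · intro h
    exact ⟨(fun h' => by cases h'), Or.inl h⟩

theorem xg_none_inr (j : ℕ) (x : XV (j+2)) :
    (XGraph (j+3)).Adj (none : Option (XV (j+2) ⊕ XV (j+2))) (some (Sum.inr x) : Option (XV (j+2) ⊕ XV (j+2))) ↔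
      XSide (j+2) x = false := by
  refine (SimpleGraph.fromRel_adj (XRel (j+3)) _ _).trans ⟨?_, ?_⟩
  · rintro ⟨_, h | h⟩ <;> exact h
  · intro h
    exact ⟨(fun h' => by cases h'), Or.inl h⟩

theorem xg_inl_inl (j : ℕ) (x y : XV (j+2)) :
    (XGraph (j+3)).Adj (some (Sum.inl x) : Option (XV (j+2) ⊕ XV (j+2))) (some (Sum.inl y) : Option (XV (j+2) ⊕ XV (j+2))) ↔
      (XGraph (j+2)).Adj x y := by
  have : ((some (Sum.inl x) : Option (XV (j+2) ⊕ XV (j+2))) ≠ some (Sum.inl y)) ↔ x ≠ y := by simp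
  exact (SimpleGraph.fromRel_adj (XRel (j+3)) _ _).trans
    ((and_congr this Iff.rfl).trans (SimpleGraph.fromRel_adj (XRel (j+2)) x y).symm)

theorem xg_inr_inr (j : ℕ) (x y : XV (j+2)) :
    (XGraph (j+3)).Adj (some (Sum.inr x) : Option (XV (j+2) ⊕ XV (j+2))) (some (Sum.inr y) : Option (XV (j+2) ⊕ XV (j+2))) ↔
      (XGraph (j+2)).Adj x y := by
  have : ((some (Sum.inr x) : Option (XV (j+2) ⊕ XV (j+2))) ≠ some (Sum.inr y)) ↔ x ≠ y := by simp
  exact (SimpleGraph.fromRel_adj (XRel (j+3)) _ _).trans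
    ((and_congr this Iff.rfl).trans (SimpleGraph.fromRel_adj (XRel (j+2)) x y).symm)

theorem xg_inl_inr (j : ℕ) (x y : XV (j+2)) :
    ¬ (XGraph (j+3)).Adj (some (Sum.inl x) : Option (XV (j+2) ⊕ XV (j+2))) (some (Sum.inr y) : Option (XV (j+2) ⊕ XV (j+2))) := by
  intro h
  have h' := (SimpleGraph.fromRel_adj (XRel (j+3)) _ _).1 h
  revert h'
  rintro ⟨_, h | h⟩ <;> exact h

theorem root_adj : ∀ (j : ℕ) (x : XV (j+2)), XSide (j+2) x = false →
    (XGraph (j+2)).Adj (XRoot (j+2)) x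
  | 0, x, h => by
    unfold XGraph
    rw [SimpleGraph.fromRel_adj]
    have h' : x = false := h
    subst h'
    refine ⟨?_, Or.inl ?_⟩
    · intro h; cases h
    · intro h; cases h
  | (j+1), none, h => by cases h
  | (j+1), some (Sum.inl x), h => by
    refine (xg_none_inl j x).2 ?_
    have h' : (!(XSide (j+2) x)) = false := h
    simpa using h'
  | (j+1), some (Sum.inr x), h => (xg_none_inr j x).2 h

theorem root_side (j : ℕ) : XSide (j+2) (XRoot (j+2)) = true := by
  cases j <;> rfl

/-- `φ` is an induced copy of `X_{j}` in `H`. -/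
def Copy (j : ℕ) (H : SimpleGraph ℕ) (φ : XV j → ℕ) : Prop :=
  Function.Injective φ ∧ ∀ x y, H.Adj (φ x) (φ y) ↔ (XGraph j).Adj x y

/-- all edges below `n` -/
def Supp (n : ℕ) (H : SimpleGraph ℕ) : Prop := ∀ a b, H.Adj a b → a < n ∧ b < n

theorem add_vertex (n : ℕ) (H : SimpleGraph ℕ) (hs : Supp n H) (S : Set ℕ)
    (hS : ∀ y ∈ S, y < n) :
    ∃ H' : SimpleGraph ℕ, Supp (n+1) H' ∧ AgreeB n H H' ∧
      (∀ y, H'.Adj n y ↔ y ∈ S) := by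
  refine ⟨⟨fun a b => H.Adj a b ∨ (a = n ∧ b ∈ S) ∨ (b = n ∧ a ∈ S), ?_, ?_⟩, ?_, ?_, ?_⟩
  · refine ⟨?_⟩
    rintro a b (h | h | h)
    · exact Or.inl h.symm
    · exact Or.inr (Or.inr h)
    · exact Or.inr (Or.inl h)
  · refine ⟨?_⟩
    rintro a (h | ⟨h, h'⟩ | ⟨h, h'⟩)
    · exact H.loopless.irrefl a h
    · have := hS _ h'; omega
    · have := hS _ h'; omega
  · rintro a b (h | ⟨h, h'⟩ | ⟨h, h'⟩)
    · have := hs _ _ h; omega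
    · have := hS _ h'; omega
    · have := hS _ h'; omega
  · intro a b ha hb
    constructor
    · exact Or.inl
    · rintro (h | ⟨h, h'⟩ | ⟨h, h'⟩)
      · exact h
      · omega
      · omega
  · intro y
    constructor
    · rintro (h | ⟨h, h'⟩ | ⟨h, h'⟩)
      · have := hs _ _ h; omega
      · exact h'
      · have := hS _ h'; omega
    · intro h; exact Or.inr (Or.inl ⟨rfl, h⟩)

/-- glueing map -/
def glue {j : ℕ} (n : ℕ) (f g : XV (j+2) → ℕ) : XV (j+3) → ℕ
  | none => n
  | some (Sum.inl x) => f x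
  | some (Sum.inr x) => g x

theorem merge {j n : ℕ} {H : SimpleGraph ℕ} (hs : Supp n H) {f g : XV (j+2) → ℕ}
    (hf : Copy (j+2) H f) (hg : Copy (j+2) H g) (hfn : ∀ x, f x < n) (hgn : ∀ x, g x < n)
    (hfg : ∀ x y, f x ≠ g y) (hna : ∀ x y, ¬ H.Adj (f x) (g y)) :
    ∃ H', Supp (n+1) H' ∧ AgreeB n H H' ∧ (∀ y, H'.Adj n y → y ∈ Set.range f ∪ Set.range g) ∧
      Copy (j+3) H' (glue n f g) := by
  obtain ⟨H', h1, h2, h3⟩ := add_vertex n H hs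
    {y | (∃ x, XSide (j+2) x = true ∧ f x = y) ∨ (∃ x, XSide (j+2) x = false ∧ g x = y)} (by
      rintro y (⟨x, _, rfl⟩ | ⟨x, _, rfl⟩)
      · exact hfn x
      · exact hgn x)
  have a1 : ∀ x, H'.Adj n (f x) ↔ XSide (j+2) x = true := by
    intro x
    rw [h3]
    constructor
    · rintro (⟨y, hy, e⟩ | ⟨y, hy, e⟩)
      · rw [← hf.1 e]; exact hy
      · exact absurd e.symm (hfg _ _)
    · intro h; exact Or.inl ⟨x, h, rfl⟩
  have a2 : ∀ x, H'.Adj n (g x) ↔ XSide (j+2) x = false := by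
    intro x
    rw [h3]
    constructor
    · rintro (⟨y, hy, e⟩ | ⟨y, hy, e⟩)
      · exact absurd e (hfg _ _)
      · rw [← hg.1 e]; exact hy
    · intro h; exact Or.inr ⟨x, h, rfl⟩
  refine ⟨H', h1, h2, ?_, ?_, ?_⟩
  · intro y hy
    rw [h3] at hy
    rcases hy with ⟨x, _, e⟩ | ⟨x, _, e⟩
    · exact Or.inl ⟨x, e⟩
    · exact Or.inr ⟨x, e⟩
  · rintro (_ | x | x) (_ | y | y) h
    · rfl
    · have h' : n = f y := h
      exact absurd h' (hfn y).ne'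
    · have h' : n = g y := h
      exact absurd h' (hgn y).ne'
    · have h' : f x = n := h
      exact absurd h' (hfn x).ne
    · have h' : f x = f y := h
      rw [hf.1 h']
    · exact absurd h (hfg x y)
    · have h' : g x = n := h
      exact absurd h' (hgn x).ne
    · exact absurd h.symm (hfg y x)
    · have h' : g x = g y := h
      rw [hg.1 h']
  · rintro (_ | x | x) (_ | y | y)
    · exact iff_of_false (SimpleGraph.irrefl _) (SimpleGraph.irrefl _)
    · exact (a1 y).trans (xg_none_inl j y).symm
    · exact (a2 y).trans (xg_none_inr j y).symm
    · refine (SimpleGraph.adj_comm _ _ _).trans (Iff.trans ?_ (SimpleGraph.adj_comm _ _ _))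
      exact (a1 x).trans (xg_none_inl j x).symm
    · exact (h2 _ _ (hfn x) (hfn y)).symm.trans ((hf.2 x y).trans (xg_inl_inl j x y).symm)
    · exact iff_of_false (fun h => hna x y ((h2 _ _ (hfn x) (hgn y)).2 h)) (xg_inl_inr j x y)
    · refine (SimpleGraph.adj_comm _ _ _).trans (Iff.trans ?_ (SimpleGraph.adj_comm _ _ _))
      exact (a2 x).trans (xg_none_inr j x).symm
    · refine (SimpleGraph.adj_comm _ _ _).trans (Iff.trans ?_ (SimpleGraph.adj_comm _ _ _))
      exact iff_of_false (fun h => hna y x ((h2 _ _ (hfn y) (hgn x)).2 h)) (xg_inl_inr j y x)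
    · exact (h2 _ _ (hgn x) (hgn y)).symm.trans ((hg.2 x y).trans (xg_inr_inr j x y).symm)

/-- Outcome of the adversary strategy. -/
def Outcome (A : OnlineAlg) (j : ℕ) (F : Finset ℕ) (H : SimpleGraph ℕ) (φ : XV (j+2) → ℕ) : Prop :=
  (∃ x, XSide (j+2) x = true ∧ colN A H (φ x) ∈ F) ∨
  ((∀ x, colN A H (φ x) ∉ F) ∧ ∃ T : Finset ℕ, T.card = j + 1 ∧
    ∀ t ∈ T, ∃ x, XSide (j+2) x = false ∧ colN A H (φ x) = t)

/-- `H'` on `[0,n')` extends `H` on `[0,n)` by a disjoint copy `φ` of `X_j`. -/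
def ExtC (j n n' : ℕ) (H H' : SimpleGraph ℕ) (φ : XV j → ℕ) : Prop :=
  n ≤ n' ∧ Supp n' H' ∧ AgreeB n H H' ∧ (∀ a b, a < n → n ≤ b → ¬ H'.Adj a b) ∧
  Copy j H' φ ∧ ∀ i, (n ≤ i ∧ i < n') ↔ ∃ x, φ x = i

theorem base (A : OnlineAlg) (F : Finset ℕ) (n : ℕ) (H : SimpleGraph ℕ) (hs : Supp n H) :
    ∃ n' H' φ, ExtC 2 n n' H H' φ ∧ Outcome A 0 F H' φ := by
  have hs1 : Supp (n+1) H := fun a b h => by have := hs a b h; omega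
  obtain ⟨H', h1, h2, h3⟩ := add_vertex (n+1) H hs1 {n} (by simp)
  have key : ∀ c : Bool, ExtC 2 n (n+2) H H' (fun b : Bool => if b = c then n else n+1) := by
    intro c
    refine ⟨by omega, h1, fun a b ha hb => h2 a b (by omega) (by omega), ?_, ⟨?_, ?_⟩, ?_⟩
    · intro a b ha hb h
      by_cases e : b = n + 1
      · subst e
        have := (h3 a).1 h.symm
        simp at this; omega
      · have := h1 _ _ h
        have := (h2 a b (by omega) (by omega)).2 h
        have := hs _ _ this
        omega
    · intro a b h
      cases a <;> cases b <;> first | rfl | (exfalso; revert h; cases c <;> simp)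
    · have e1 : H'.Adj (n+1) n := (h3 n).2 rfl
      have e2 := e1.symm
      have : ∀ x y : Bool, (XGraph 2).Adj x y ↔ x ≠ y := by
        intro x y
        exact (SimpleGraph.fromRel_adj (XRel 2) x y).trans ⟨fun h => h.1, fun h => ⟨h, Or.inl h⟩⟩
      intro x y
      refine Iff.trans ?_ (this x y).symm
      change Bool at x y
      cases x <;> cases y <;> cases c <;> simp [e1, e2]
    · intro i
      constructor
      · intro h
        by_cases e : i = n
        · exact ⟨c, by simp [e]⟩
        · refine ⟨!c, ?_⟩
          simp; omega
      · rintro ⟨x, hx⟩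
        change Bool at x
        simp only at hx
        split_ifs at hx <;> omega
  by_cases hn : colN A H' n ∈ F
  · refine ⟨_, _, _, key true, Or.inl ⟨true, rfl, ?_⟩⟩
    simpa using hn
  by_cases hn1 : colN A H' (n+1) ∈ F
  · refine ⟨_, _, _, key false, Or.inl ⟨true, rfl, ?_⟩⟩
    simpa using hn1
  refine ⟨_, _, _, key true, Or.inr ⟨?_, {colN A H' (n+1)}, by simp, ?_⟩⟩
  · intro x
    change Bool at x
    cases x
    · simpa using hn1
    · simpa using hn
  · intro t ht
    refine ⟨false, rfl, ?_⟩
    simp at ht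
    simp [ht]

theorem strategy (A : OnlineAlg) (hA : IsProperAlg A) (j : ℕ) :
    ∀ (F : Finset ℕ) (n : ℕ) (H : SimpleGraph ℕ), Supp n H →
    ∃ n' H' φ, ExtC (j+2) n n' H H' φ ∧ Outcome A j F H' φ := by
  induction j with
  | zero => exact fun F n H hs => base A F n H hs
  | succ j ih =>
    intro F n H hs
    obtain ⟨n1, H1, f, ⟨hn1, hs1, hag1, hno1, hc1, hr1⟩, o1⟩ := ih F n H hs
    obtain ⟨n2, H2, g, ⟨hn2, hs2, hag2, hno2, hc2, hr2⟩, o2⟩ :=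
      ih (insert (colN A H1 (f (XRoot (j+2)))) F) n1 H1 hs1
    have fb : ∀ x, n ≤ f x ∧ f x < n1 := fun x => (hr1 _).2 ⟨x, rfl⟩
    have gb : ∀ x, n1 ≤ g x ∧ g x < n2 := fun x => (hr2 _).2 ⟨x, rfl⟩
    have hc1' : Copy (j+2) H2 f :=
      ⟨hc1.1, fun x y => (hag2 _ _ (fb x).2 (fb y).2).symm.trans (hc1.2 x y)⟩
    have cf : ∀ x, colN A H1 (f x) = colN A H2 (f x) := fun x => colN_agree A hag2 (fb x).2
    -- both merges
    have ext : ∀ u v : XV (j+2) → ℕ, (u = f ∧ v = g ∨ u = g ∧ v = f) →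
        ∃ H3, ExtC (j+3) n (n2+1) H H3 (glue n2 u v) ∧
          (∀ x, colN A H3 (u x) = colN A H2 (u x)) ∧ (∀ x, colN A H3 (v x) = colN A H2 (v x)) := by
      intro u v huv
      have hu : Copy (j+2) H2 u := by rcases huv with ⟨rfl, rfl⟩ | ⟨rfl, rfl⟩ <;> assumption
      have hv : Copy (j+2) H2 v := by rcases huv with ⟨rfl, rfl⟩ | ⟨rfl, rfl⟩ <;> assumption
      have hub : ∀ x, n ≤ u x ∧ u x < n2 := by
        intro x
        have := fb x
        have := gb x
        rcases huv with ⟨rfl, rfl⟩ | ⟨rfl, rfl⟩ <;> omega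
      have hvb : ∀ x, n ≤ v x ∧ v x < n2 := by
        intro x
        have := fb x
        have := gb x
        rcases huv with ⟨rfl, rfl⟩ | ⟨rfl, rfl⟩ <;> omega
      have hne : ∀ x y, u x ≠ v y := by
        intro x y
        have := fb x
        have := gb x
        have := fb y
        have := gb y
        rcases huv with ⟨rfl, rfl⟩ | ⟨rfl, rfl⟩ <;> omega
      have hna : ∀ x y, ¬ H2.Adj (u x) (v y) := by
        intro x y
        rcases huv with ⟨rfl, rfl⟩ | ⟨rfl, rfl⟩
        · exact hno2 _ _ (fb x).2 (gb y).1
        · exact fun h => hno2 _ _ (fb y).2 (gb x).1 h.symm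
      have hcov : ∀ i, n ≤ i → i < n2 → (∃ x, u x = i) ∨ (∃ x, v x = i) := by
        intro i h1 h2
        by_cases h : i < n1
        · have := (hr1 i).1 ⟨h1, h⟩
          rcases huv with ⟨rfl, rfl⟩ | ⟨rfl, rfl⟩ <;> tauto
        · have := (hr2 i).1 ⟨by omega, h2⟩
          rcases huv with ⟨rfl, rfl⟩ | ⟨rfl, rfl⟩ <;> tauto
      obtain ⟨H3, s3, ag3, nb3, c3⟩ := merge hs2 hu hv (fun x => (hub x).2) (fun x => (hvb x).2) hne hna
      refine ⟨H3, ⟨by omega, s3, ?_, ?_, c3, ?_⟩,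
        fun x => (colN_agree A ag3 (hub x).2).symm, fun x => (colN_agree A ag3 (hvb x).2).symm⟩
      · intro a b ha hb
        exact (hag1 a b ha hb).trans ((hag2 a b (by omega) (by omega)).trans
          (ag3 a b (by omega) (by omega)))
      · intro a b ha hb h
        by_cases e : b = n2
        · subst e
          rcases nb3 a h.symm with ⟨x, hx⟩ | ⟨x, hx⟩
          · have := hub x; omega
          · have := hvb x; omega
        · have := s3 _ _ h
          have h' := (ag3 a b (by omega) (by omega)).2 h
          by_cases e' : b < n1
          · exact hno1 a b ha hb ((hag2 a b (by omega) e').2 h')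
          · exact hno2 a b (by omega) (by omega) h'
      · intro i
        constructor
        · rintro ⟨h1, h2⟩
          by_cases e : i = n2
          · exact ⟨(none : Option (XV (j+2) ⊕ XV (j+2))), e.symm⟩
          · rcases hcov i h1 (by omega) with ⟨x, hx⟩ | ⟨x, hx⟩
            · exact ⟨(some (Sum.inl x) : Option (XV (j+2) ⊕ XV (j+2))), hx⟩
            · exact ⟨(some (Sum.inr x) : Option (XV (j+2) ⊕ XV (j+2))), hx⟩
        · rintro ⟨(_ | x | x), hx⟩
          · have : n2 = i := hx
            omega
          · have : u x = i := hx
            have := hub x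
            omega
          · have : v x = i := hx
            have := hvb x
            omega
    -- if a color of F occurs anywhere, finish
    have hit : ∀ u v : XV (j+2) → ℕ, (u = f ∧ v = g ∨ u = g ∧ v = f) →
        (∃ x, colN A H2 (u x) ∈ F) →
        ∃ n' H' φ, ExtC (j+3) n n' H H' φ ∧ Outcome A (j+1) F H' φ := by
      rintro u v huv ⟨x, hx⟩
      cases hside : XSide (j+2) x with
      | false =>
        obtain ⟨H3, e3, cu, cv⟩ := ext u v huv
        refine ⟨_, _, _, e3, Or.inl ⟨(some (Sum.inl x) : Option (XV (j+2) ⊕ XV (j+2))), ?_, ?_⟩⟩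
        · change (!(XSide (j+2) x)) = true
          simp [hside]
        · change colN A H3 (u x) ∈ F
          rw [cu]; exact hx
      | true =>
        obtain ⟨H3, e3, cu, cv⟩ := ext v u (by tauto)
        refine ⟨_, _, _, e3, Or.inl ⟨(some (Sum.inr x) : Option (XV (j+2) ⊕ XV (j+2))), hside, ?_⟩⟩
        change colN A H3 (u x) ∈ F
        rw [cv]; exact hx
    by_cases hF1 : ∃ x, colN A H2 (f x) ∈ F
    · exact hit f g (by tauto) hF1
    by_cases hF2 : ∃ x, colN A H2 (g x) ∈ F
    · exact hit g f (by tauto) hF2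
    push Not at hF1 hF2
    -- finishing when no color of F occurs
    have fin : ∀ u v : XV (j+2) → ℕ, (u = f ∧ v = g ∨ u = g ∧ v = f) → ∀ (c : ℕ) (T : Finset ℕ),
        T.card = j + 1 → c ∉ T →
        (∃ x, XSide (j+2) x = true ∧ colN A H2 (u x) = c) →
        (∀ t ∈ T, ∃ x, XSide (j+2) x = false ∧ colN A H2 (v x) = t) →
        ∃ n' H' φ, ExtC (j+3) n n' H H' φ ∧ Outcome A (j+1) F H' φ := by
      intro u v huv c T hT hcT ⟨x, hx, hxc⟩ hv
      obtain ⟨H3, e3, cu, cv⟩ := ext u v huv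
      refine ⟨_, _, _, e3, ?_⟩
      by_cases hr : colN A H3 n2 ∈ F
      · exact Or.inl ⟨(none : Option (XV (j+2) ⊕ XV (j+2))), rfl, hr⟩
      · refine Or.inr ⟨?_, insert c T, by rw [Finset.card_insert_of_notMem hcT, hT], ?_⟩
        · rintro (_ | y | y)
          · exact hr
          · change colN A H3 (u y) ∉ F
            rw [cu]
            rcases huv with ⟨rfl, rfl⟩ | ⟨rfl, rfl⟩ <;> tauto
          · change colN A H3 (v y) ∉ F
            rw [cv]
            rcases huv with ⟨rfl, rfl⟩ | ⟨rfl, rfl⟩ <;> tauto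
        · intro t ht
          rcases Finset.mem_insert.1 ht with rfl | ht
          · refine ⟨(some (Sum.inl x) : Option (XV (j+2) ⊕ XV (j+2))), ?_, ?_⟩
            · change (!(XSide (j+2) x)) = false
              simp [hx]
            · change colN A H3 (u x) = t
              rw [cu]; exact hxc
          · obtain ⟨y, hy, hyt⟩ := hv t ht
            refine ⟨(some (Sum.inr y) : Option (XV (j+2) ⊕ XV (j+2))), hy, ?_⟩
            change colN A H3 (v y) = t
            rw [cv]; exact hyt
    rcases o1 with ⟨x, _, hx⟩ | ⟨_, T1, hT1, hT1'⟩
    · rw [cf] at hx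
      exact absurd hx (hF1 x)
    rcases o2 with ⟨x, hx, hxc⟩ | ⟨hav, T2, hT2, hT2'⟩
    · rcases Finset.mem_insert.1 hxc with hxc | hxc
      · refine fin g f (by tauto) _ T1 hT1 ?_ ⟨x, hx, hxc⟩ ?_
        · intro hc
          obtain ⟨y, hy, hyc⟩ := hT1' _ hc
          have := (hc1.2 _ _).2 (root_adj j y hy)
          exact colN_proper hA this hyc.symm
        · intro t ht
          obtain ⟨y, hy, hyc⟩ := hT1' _ ht
          exact ⟨y, hy, by rw [← cf]; exact hyc⟩
      · exact absurd hxc (hF2 x)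
    · refine fin f g (by tauto) (colN A H1 (f (XRoot (j+2)))) T2 hT2 ?_
        ⟨XRoot (j+2), root_side j, (cf _).symm⟩ hT2'
      intro hc
      obtain ⟨y, hy, hyc⟩ := hT2' _ hc
      apply hav y
      rw [hyc]
      exact Finset.mem_insert_self _ _

theorem finish {V : Type} [Fintype V] (G : SimpleGraph V) (j : ℕ) (e : XGraph (j+2) ↪g G)
    (A : OnlineAlg) (hA : IsProperAlg A) :
    ∃ (n : ℕ) (π : Fin n ≃ V), j + 2 ≤ numColors A (G.comap π) := by
  classical
  obtain ⟨m, H, φ, ⟨-, hs, -, -, hc, hr⟩, o⟩ := strategy A hA j ∅ 0 ⊥ (fun a b h => by simp at h)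
  rcases o with ⟨x, _, hx⟩ | ⟨-, T, hT, hT'⟩
  · simp at hx
  have hex : ∀ i, i < m → ∃ x, φ x = i := fun i hi => (hr i).1 ⟨by omega, hi⟩
  haveI : Nonempty (XV (j+2)) := ⟨XRoot (j+2)⟩
  choose! inv hinv using hex
  have hle : m ≤ Fintype.card V := by
    have : Function.Injective (fun i : Fin m => e (inv i)) := by
      intro a b h
      have h' := e.injective h
      have := congrArg φ h'
      rw [hinv _ a.2, hinv _ b.2] at this
      exact Fin.ext this
    simpa using Fintype.card_le_of_injective _ this
  obtain ⟨π, hπ⟩ : ∃ π : Fin (Fintype.card V) ≃ V, ∀ i, i.val < m → π i = e (inv i) := by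
    obtain ⟨g, hg⟩ := Finset.exists_equiv_extend_of_card_eq (α := Fin (Fintype.card V))
      (t := (Finset.univ : Finset V)) (by simp [Finset.card_univ])
      (s := Finset.univ.filter (fun i => i.val < m)) (f := fun i => e (inv i.val)) (by simp) (by
        intro a ha b hb h
        simp at ha hb
        have h' := e.injective h
        have := congrArg φ h'
        rw [hinv _ ha, hinv _ hb] at this
        exact Fin.ext this)
    exact ⟨g.trans (Equiv.subtypeUnivEquiv (by simp)), fun i hi => hg i (by simpa using hi)⟩
  refine ⟨_, π, ?_⟩
  have hφ : ∀ x, φ x < m := fun x => ((hr _).2 ⟨x, rfl⟩).2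
  have col : ∀ i : Fin (Fintype.card V), i.val < m → runColor A (G.comap π) i = colN A H i := by
    intro i hi
    unfold runColor colN
    congr 1
    ext a b
    simp only [SimpleGraph.comap_adj]
    have ha : a.val < m := by omega
    have hb : b.val < m := by omega
    rw [hπ _ (by simpa using ha), hπ _ (by simpa using hb), e.map_adj_iff, ← hc.2]
    simp only [Fin.val_castLE]
    rw [hinv _ ha, hinv _ hb]
  have hmem : ∀ x, colN A H (φ x) ∈ Finset.univ.image (runColor A (G.comap π)) := by
    intro x
    refine Finset.mem_image.2 ⟨⟨φ x, (hφ x).trans_le hle⟩, Finset.mem_univ _, ?_⟩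
    exact col _ (hφ x)
  have hcT : colN A H (φ (XRoot (j+2))) ∉ T := by
    intro h
    obtain ⟨y, hy, hyc⟩ := hT' _ h
    exact colN_proper hA ((hc.2 _ _).2 (root_adj j y hy)) hyc.symm
  have : (insert (colN A H (φ (XRoot (j+2)))) T).card = j + 2 := by
    rw [Finset.card_insert_of_notMem hcT, hT]
  rw [← this]
  apply Finset.card_le_card
  intro t ht
  rcases Finset.mem_insert.1 ht with rfl | ht
  · exact hmem _
  · obtain ⟨y, _, rfl⟩ := hT' _ ht
    exact hmem _

theorem stmt2 {V : Type} [Fintype V] (G : SimpleGraph V) (k : ℕ) (hk : 1 ≤ k)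
    (h : Nonempty (XGraph k ↪g G)) :
    k ≤ onlineChrom V G := by
  classical
  obtain ⟨e⟩ := h
  unfold onlineChrom
  apply le_csInf
  · refine ⟨Fintype.card V, fun k _ => k, ?_, ?_⟩
    · intro n G i j h h'
      have h2 : i.val = j.val := h'
      exact h.ne (Fin.ext h2)
    · intro n π
      refine Finset.card_image_le.trans ?_
      rw [Finset.card_univ, Fintype.card_congr π]
  · rintro m ⟨A, hA, hm⟩
    match k, hk, e with
    | 1, _, e =>
      have π : Fin (Fintype.card V) ≃ V := (Fintype.equivFin V).symm
      refine le_trans ?_ (hm _ π)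
      refine Finset.card_pos.2 ⟨runColor A (G.comap π) (π.symm (e PUnit.unit)), ?_⟩
      exact Finset.mem_image_of_mem _ (Finset.mem_univ _)
    | (j+2), _, e =>
      obtain ⟨n, π, h⟩ := finish G j e A hA
      exact h.trans (hm n π)
end
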